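/- arXiv:2402.02390 — 2 statements merged into one kernel-verified Lean document; each statement's English description precedes it below -/
import Mathlib

section
/- There is a constant c' such that for all n, every trifferent code C ⊆ {0,1,2}^n in which each codeword contains exactly three 2's satisfies |C| ≤ c' · n^(13/5). -/
def Trifferent {n : ℕ} (C : Finset (Fin n → Fin 3)) : Prop :=
  ∀ x ∈ C, ∀ y ∈ C, ∀ z ∈ C, x ≠ y → x ≠ z → y ≠ z →
    ∃ i : Fin n, ({x i, y i, z i} : Set (Fin 3)) = Set.univ

def twosOf {n : ℕ} (x : Fin n → Fin 3) : Finset (Fin n) :=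
  Finset.univ.filter fun i => x i = 2

def AdjP {n : ℕ} (C : Finset (Fin n → Fin 3)) (a : Fin n) (P : Finset (Fin n)) : Prop :=
  a ∉ P ∧ ∃ x ∈ C, twosOf x = insert a P

lemma univ_facts (p q r : Fin 3) (h : ({p, q, r} : Set (Fin 3)) = Set.univ) :
    p ≠ q ∧ p ≠ r ∧ q ≠ r ∧ (p = 2 ∨ q = 2 ∨ r = 2) := by
  have h0 : (0 : Fin 3) ∈ ({p, q, r} : Set (Fin 3)) := h ▸ Set.mem_univ _
  have h1 : (1 : Fin 3) ∈ ({p, q, r} : Set (Fin 3)) := h ▸ Set.mem_univ _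
  have h2 : (2 : Fin 3) ∈ ({p, q, r} : Set (Fin 3)) := h ▸ Set.mem_univ _
  simp only [Set.mem_insert_iff, Set.mem_singleton_iff] at h0 h1 h2
  clear h
  revert p q r
  decide

lemma eq_of_bits (p q : Fin 3) (hp : p ≠ 2) (hq : q ≠ 2) (h : p = 1 ↔ q = 1) : p = q := by
  revert p q
  decide

open Classical in
lemma key {n : ℕ} (C : Finset (Fin n → Fin 3)) (hC : Trifferent C) (A : Finset (Fin n))
    (hA : A.card = 5) :
    ((Finset.powersetCard 2 Finset.univ).filter fun P => ∀ a ∈ A, AdjP C a P).card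
      ≤ 243 ^ 5 := by
  by_contra hlt
  push Not at hlt
  set Q := (Finset.powersetCard 2 Finset.univ).filter fun P => ∀ a ∈ A, AdjP C a P with hQ
  let X : Fin n → Finset (Fin n) → (Fin n → Fin 3) := fun a P =>
    if h : AdjP C a P then h.2.choose else fun _ => 0
  have hX : ∀ a P, AdjP C a P → X a P ∈ C ∧ twosOf (X a P) = insert a P := by
    intro a P h
    have := h.2.choose_spec
    simp only [X, dif_pos h]
    exact this
  have hX2 : ∀ a P, AdjP C a P → ∀ i, X a P i = 2 ↔ (i = a ∨ i ∈ P) := by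
    intro a P h i
    have h2 := (hX a P h).2
    have : i ∈ twosOf (X a P) ↔ i ∈ insert a P := by rw [h2]
    simpa [twosOf] using this
  let col : Finset (Fin n) → (A → A → Fin 3) := fun P a b => X a P b
  have hcard : (Finset.univ : Finset (A → A → Fin 3)).card < Q.card := by
    refine lt_of_le_of_lt (le_of_eq ?_) hlt
    simp [hA]
  obtain ⟨P, hP, P', hP', hne, hcol⟩ :=
    Finset.exists_ne_map_eq_of_card_lt_of_maps_to hcard
      (f := col) (fun _ _ => Finset.mem_coe.2 (Finset.mem_univ _))
  simp only [hQ, Finset.mem_filter, Finset.mem_powersetCard, Finset.subset_univ, true_and]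
    at hP hP'
  let pat : Fin n → (P' → Bool) := fun a i => decide (X a P i = 1)
  have hcard2 : (Finset.univ : Finset (P' → Bool)).card < A.card := by
    simp [hA, hP'.1]
  obtain ⟨a, ha, b, hb, hab, hpat⟩ :=
    Finset.exists_ne_map_eq_of_card_lt_of_maps_to hcard2
      (f := pat) (fun _ _ => Finset.mem_coe.2 (Finset.mem_univ _))
  have aP := hP.2 a ha
  have bP := hP.2 b hb
  have aP' := hP'.2 a ha
  have n1 : X a P ≠ X a P' := by
    intro h
    have h2 : insert a P = insert a P' := by rw [← (hX a P aP).2, ← (hX a P' aP').2, h]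
    apply hne
    rw [← Finset.erase_insert aP.1, ← Finset.erase_insert aP'.1, h2]
  have n2 : X a P ≠ X b P := by
    intro h
    have := (hX2 a P aP a).2 (Or.inl rfl)
    rw [h, hX2 b P bP a] at this
    rcases this with h | h
    · exact hab h
    · exact aP.1 h
  have n3 : X a P' ≠ X b P := by
    intro h
    have := (hX2 b P bP b).2 (Or.inl rfl)
    rw [← h, hX2 a P' aP' b] at this
    rcases this with h | h
    · exact hab h.symm
    · exact (hP'.2 b hb).1 h
  obtain ⟨i, hi⟩ := hC _ (hX a P aP).1 _ (hX a P' aP').1 _ (hX b P bP).1 n1 n2 n3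
  obtain ⟨e1, e2, e3, e4⟩ := univ_facts _ _ _ hi
  by_cases hiA : i ∈ A
  · exact e1 (congrFun (congrFun hcol ⟨a, ha⟩) ⟨i, hiA⟩)
  have ia : i ≠ a := fun h => hiA (h ▸ ha)
  have ib : i ≠ b := fun h => hiA (h ▸ hb)
  have ta := hX2 a P aP i
  have tb := hX2 b P bP i
  have ta' := hX2 a P' aP' i
  simp only [ia, ib, false_or] at ta tb ta'
  by_cases hiP : i ∈ P
  · exact e2 ((ta.2 hiP).trans (tb.2 hiP).symm)
  have iP' : i ∈ P' := by tauto
  have := congrFun hpat ⟨i, iP'⟩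
  simp only [pat, decide_eq_decide] at this
  exact e2 (eq_of_bits _ _ (fun h => hiP (ta.1 h)) (fun h => hiP (tb.1 h)) this)

lemma fiber_le {n : ℕ} (C : Finset (Fin n → Fin 3)) (hC : Trifferent C) :
    C.card ≤ 2 * (C.image twosOf).card := by
  apply Finset.card_le_mul_card_image
  intro T _
  by_contra h
  push Not at h
  obtain ⟨x, y, z, hx, hy, hz, hxy, hxz, hyz⟩ := Finset.two_lt_card_iff.1 h
  simp only [Finset.mem_filter] at hx hy hz
  obtain ⟨i, hi⟩ := hC x hx.1 y hy.1 z hz.1 hxy hxz hyz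
  obtain ⟨e1, e2, e3, e4⟩ := univ_facts _ _ _ hi
  have tx : i ∈ twosOf x ↔ i ∈ T := by rw [hx.2]
  have ty : i ∈ twosOf y ↔ i ∈ T := by rw [hy.2]
  have tz : i ∈ twosOf z ↔ i ∈ T := by rw [hz.2]
  simp only [twosOf, Finset.mem_filter, Finset.mem_univ, true_and] at tx ty tz
  by_cases hT : i ∈ T
  · exact e1 ((tx.2 hT).trans (ty.2 hT).symm)
  · tauto

open Classical in
noncomputable def nbr {n : ℕ} (C : Finset (Fin n → Fin 3)) (P : Finset (Fin n)) :
    Finset (Fin n) := Finset.univ.filter fun a => AdjP C a P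

open Classical in
lemma image_le {n : ℕ} (C : Finset (Fin n → Fin 3))
    (h3 : ∀ x ∈ C, (Finset.univ.filter fun i => x i = 2).card = 3) :
    (C.image twosOf).card ≤
      ∑ P ∈ Finset.powersetCard 2 (Finset.univ : Finset (Fin n)), (nbr C P).card := by
  have hsub : C.image twosOf ⊆ (Finset.powersetCard 2 (Finset.univ : Finset (Fin n))).biUnion
      (fun P => (nbr C P).image fun a => insert a P) := by
    intro T hT
    obtain ⟨x, hx, rfl⟩ := Finset.mem_image.1 hT
    have hc : (twosOf x).card = 3 := h3 x hx
    obtain ⟨a, P, haP, hins, hP⟩ := Finset.card_eq_succ.1 hc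
    simp only [Finset.mem_biUnion, Finset.mem_image, Finset.mem_powersetCard, nbr,
      Finset.mem_filter, Finset.mem_univ, true_and, Finset.subset_univ]
    exact ⟨P, hP, a, ⟨haP, x, hx, hins.symm⟩, hins⟩
  refine (Finset.card_le_card hsub).trans (Finset.card_biUnion_le.trans ?_)
  exact Finset.sum_le_sum fun P _ => Finset.card_image_le

open Classical in
lemma count5 {n : ℕ} (C : Finset (Fin n → Fin 3)) (hC : Trifferent C) :
    ∑ P ∈ Finset.powersetCard 2 (Finset.univ : Finset (Fin n)), ((nbr C P).card).choose 5
      ≤ n.choose 5 * 243 ^ 5 := by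
  have h1 : ∀ P : Finset (Fin n), ((nbr C P).card).choose 5 =
      ((Finset.powersetCard 5 (Finset.univ : Finset (Fin n))).filter
        fun A => ∀ a ∈ A, AdjP C a P).card := by
    intro P
    rw [← Finset.card_powersetCard]
    congr 1
    ext A
    simp only [Finset.mem_powersetCard, Finset.mem_filter, Finset.subset_univ, true_and,
      Finset.subset_iff, nbr, Finset.mem_univ]
    tauto
  simp only [h1]
  have h2 := Finset.sum_card_bipartiteAbove_eq_sum_card_bipartiteBelow
    (s := Finset.powersetCard 2 (Finset.univ : Finset (Fin n)))
    (t := Finset.powersetCard 5 (Finset.univ : Finset (Fin n)))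
    (fun P A => ∀ a ∈ A, AdjP C a P)
  simp only [Finset.bipartiteAbove, Finset.bipartiteBelow] at h2
  rw [h2]
  refine (Finset.sum_le_card_nsmul _ _ (243 ^ 5) ?_).trans ?_
  · intro A hA
    exact key C hC A (Finset.mem_powersetCard.1 hA).2
  · simp [Finset.card_powersetCard]

lemma pow_bound {n : ℕ} (C : Finset (Fin n → Fin 3)) (hC : Trifferent C) :
    (∑ P ∈ Finset.powersetCard 2 (Finset.univ : Finset (Fin n)), ((nbr C P).card - 4)) ^ 5
      ≤ (n ^ 2) ^ 4 * (243 ^ 5 * n ^ 5) := by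
  set S := Finset.powersetCard 2 (Finset.univ : Finset (Fin n))
  have hS : S.card ≤ n ^ 2 := by
    simp only [S, Finset.card_powersetCard, Finset.card_univ, Fintype.card_fin]
    exact Nat.choose_le_pow n 2
  have hdesc : ∀ d : ℕ, (d - 4) ^ 5 ≤ 120 * d.choose 5 := by
    intro d
    have := Nat.pow_sub_le_descFactorial d 5
    rw [Nat.descFactorial_eq_factorial_mul_choose] at this
    simpa [Nat.factorial] using this
  have h5 : 120 * n.choose 5 ≤ n ^ 5 := by
    have := Nat.descFactorial_le_pow n 5
    rw [Nat.descFactorial_eq_factorial_mul_choose] at this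
    simpa [Nat.factorial] using this
  calc _ ≤ S.card ^ 4 * ∑ P ∈ S, ((nbr C P).card - 4) ^ 5 :=
        pow_sum_le_card_mul_sum_pow (fun _ _ => Nat.zero_le _) 4
    _ ≤ (n ^ 2) ^ 4 * (243 ^ 5 * n ^ 5) := by
      refine Nat.mul_le_mul (Nat.pow_le_pow_left hS 4) ?_
      calc _ ≤ ∑ P ∈ S, 120 * ((nbr C P).card).choose 5 := Finset.sum_le_sum fun P _ => hdesc _
        _ = 120 * ∑ P ∈ S, ((nbr C P).card).choose 5 := by rw [Finset.mul_sum]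
        _ ≤ 120 * (n.choose 5 * 243 ^ 5) := Nat.mul_le_mul_left _ (count5 C hC)
        _ = 243 ^ 5 * (120 * n.choose 5) := by ring
        _ ≤ _ := Nat.mul_le_mul_left _ h5

theorem three_bounded_trifferent_bound :
    ∃ c' : ℝ, ∀ n : ℕ, ∀ C : Finset (Fin n → Fin 3), Trifferent C →
      (∀ x ∈ C, (Finset.univ.filter fun i => x i = 2).card = 3) →
      (C.card : ℝ) ≤ c' * (n : ℝ) ^ ((13 : ℝ) / 5) := by
  refine ⟨494, fun n C hC h3 => ?_⟩
  have k1 := fiber_le C hC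
  have k2 := image_le C h3
  have k3 := pow_bound C hC
  set S := Finset.powersetCard 2 (Finset.univ : Finset (Fin n)) with hSdef
  have hS : S.card ≤ n ^ 2 := by
    simp only [S, Finset.card_powersetCard, Finset.card_univ, Fintype.card_fin]
    exact Nat.choose_le_pow n 2
  have k4 : ∑ P ∈ S, (nbr C P).card ≤ ∑ P ∈ S, ((nbr C P).card - 4) + 4 * n ^ 2 := by
    calc _ ≤ ∑ P ∈ S, (((nbr C P).card - 4) + 4) := Finset.sum_le_sum fun P _ => by omega
      _ = ∑ P ∈ S, ((nbr C P).card - 4) + S.card * 4 := by simp [Finset.sum_add_distrib]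
      _ ≤ _ := by omega
  set s := ∑ P ∈ S, ((nbr C P).card - 4)
  have hn0 : (0 : ℝ) ≤ n := Nat.cast_nonneg n
  have hpow : ((n : ℝ) ^ ((13 : ℝ) / 5)) ^ 5 = (n : ℝ) ^ 13 := by
    rw [← Real.rpow_natCast, ← Real.rpow_mul hn0, ← Real.rpow_natCast]
    norm_num
  have hs : (s : ℝ) ≤ 243 * (n : ℝ) ^ ((13 : ℝ) / 5) := by
    refine le_of_pow_le_pow_left₀ (n := 5) (by norm_num) (by positivity) ?_
    rw [mul_pow, hpow]
    have : (s : ℝ) ^ 5 ≤ ((n : ℝ) ^ 2) ^ 4 * (243 ^ 5 * (n : ℝ) ^ 5) := by exact_mod_cast k3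
    calc _ ≤ _ := this
      _ = _ := by ring
  have hsq : (n : ℝ) ^ 2 ≤ (n : ℝ) ^ ((13 : ℝ) / 5) := by
    rcases Nat.eq_zero_or_pos n with h | h
    · subst h
      simp
    · rw [← Real.rpow_natCast]
      exact Real.rpow_le_rpow_of_exponent_le (by exact_mod_cast h) (by norm_num)
  have hfin : (C.card : ℝ) ≤ 2 * (s + 4 * (n : ℝ) ^ 2) := by
    have : C.card ≤ 2 * (s + 4 * n ^ 2) := by omega
    exact_mod_cast this
  linarith
end

section
/- There exists a universal constant c such that every trifferent code C ⊆ {0,1,2}^n satisfies |C| ≤ c · n^(−2/5) · (3/2)^n. -/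
/-! ### Part 1: the symmetric theta configuration is impossible (a verified case tree) -/

/-- Case trees.  Edges are numbered `3 * s + p` with `s` the edge type and `p` the index. -/
inductive CaseTree where
  | C (i j k : ℕ) : CaseTree
  | U (v : ℕ) (b : Bool) (i j k : ℕ) (t : CaseTree) : CaseTree
  | S (v : ℕ) (l r : CaseTree) : CaseTree

/-- Endpoint types of the edge types: the vertex types are
`x = 0, y = 1, a = 2, b = 3, q = 4, r = 5`; the edge types are
`ar = 0, rq = 1, qb = 2, xq = 3, yr = 4, xa = 5, yb = 6`. -/
def epA (s : ℕ) : ℕ :=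
  match s with
  | 0 => 2 | 1 => 5 | 2 => 4 | 3 => 0 | 4 => 1 | 5 => 0 | _ => 1

def epB (s : ℕ) : ℕ :=
  match s with
  | 0 => 5 | 1 => 4 | 2 => 3 | 3 => 4 | 4 => 5 | 5 => 2 | _ => 3

/-- Incidence of the edge `(s, p)` with the vertex `(u, p')`. -/
def incB (s p u p' : ℕ) : Bool :=
  (u == epA s || u == epB s) && (Nat.blt u 4 || p == p')

def keyN (s p u p' : ℕ) : ℕ :=
  if Nat.ble s 2 && Nat.ble u 1 then 0
  else if (u == 2 && s == 6) || (u == 3 && s == 5) || (u == 4 && s == 5) || (u == 5 && s == 6) then 0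
  else 1 + (s * 6 + u) * 3 +
    (if Nat.ble 5 s || Nat.blt u 4 || p == p' then 0 else if Nat.blt p p' then 1 else 2)

def vertL : List (ℕ × ℕ) :=
  [(0, 0), (1, 0), (2, 0), (3, 0), (4, 0), (4, 1), (4, 2), (5, 0), (5, 1), (5, 2)]

/-- `k` and `l` are known to be equal. -/
def sameB (T F k l : ℕ) : Bool :=
  k == l || (Nat.testBit T k && Nat.testBit T l) || (Nat.testBit F k && Nat.testBit F l)

/-- At this vertex the three edges are known not to be separated. -/
def falsAt (T F i j k : ℕ) (v : ℕ × ℕ) : Bool :=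
  match incB (i / 3) (i % 3) v.1 v.2, incB (j / 3) (j % 3) v.1 v.2,
      incB (k / 3) (k % 3) v.1 v.2 with
  | true, false, false =>
      sameB T F (keyN (j / 3) (j % 3) v.1 v.2) (keyN (k / 3) (k % 3) v.1 v.2)
  | false, true, false =>
      sameB T F (keyN (i / 3) (i % 3) v.1 v.2) (keyN (k / 3) (k % 3) v.1 v.2)
  | false, false, true =>
      sameB T F (keyN (i / 3) (i % 3) v.1 v.2) (keyN (j / 3) (j % 3) v.1 v.2)
  | _, _, _ => true

def edgeOK (i : ℕ) : Bool := Nat.ble i 15 || i == 18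

def falsT (T F i j k : ℕ) : Bool :=
  Nat.blt i j && Nat.blt j k && edgeOK i && edgeOK j && edgeOK k && vertL.all (falsAt T F i j k)

def checkT : CaseTree → ℕ → ℕ → Bool
  | .C i j k, T, F => falsT T F i j k
  | .U v true i j k t, T, F => falsT T (F ||| 2 ^ v) i j k && checkT t (T ||| 2 ^ v) F
  | .U v false i j k t, T, F => falsT (T ||| 2 ^ v) F i j k && checkT t T (F ||| 2 ^ v)
  | .S v l r, T, F => checkT l T (F ||| 2 ^ v) && checkT r (T ||| 2 ^ v) F

/-- The vertex `v` separates the edges `i, j, k`. -/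
def SepAt (val : ℕ → Bool) (i j k : ℕ) (v : ℕ × ℕ) : Prop :=
  (incB (i / 3) (i % 3) v.1 v.2 = true ∧ incB (j / 3) (j % 3) v.1 v.2 = false ∧
    incB (k / 3) (k % 3) v.1 v.2 = false ∧
    val (keyN (j / 3) (j % 3) v.1 v.2) ≠ val (keyN (k / 3) (k % 3) v.1 v.2)) ∨
  (incB (i / 3) (i % 3) v.1 v.2 = false ∧ incB (j / 3) (j % 3) v.1 v.2 = true ∧
    incB (k / 3) (k % 3) v.1 v.2 = false ∧
    val (keyN (i / 3) (i % 3) v.1 v.2) ≠ val (keyN (k / 3) (k % 3) v.1 v.2)) ∨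
  (incB (i / 3) (i % 3) v.1 v.2 = false ∧ incB (j / 3) (j % 3) v.1 v.2 = false ∧
    incB (k / 3) (k % 3) v.1 v.2 = true ∧
    val (keyN (i / 3) (i % 3) v.1 v.2) ≠ val (keyN (j / 3) (j % 3) v.1 v.2))

theorem sameB_sound {val : ℕ → Bool} {T F k l : ℕ}
    (hT : ∀ k, Nat.testBit T k = true → val k = true)
    (hF : ∀ k, Nat.testBit F k = true → val k = false)
    (h : sameB T F k l = true) : val k = val l := by
  unfold sameB at h
  simp only [Bool.or_eq_true, Bool.and_eq_true, beq_iff_eq] at h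
  rcases h with (h | ⟨h1, h2⟩) | ⟨h1, h2⟩
  · rw [h]
  · rw [hT _ h1, hT _ h2]
  · rw [hF _ h1, hF _ h2]

theorem falsT_sound {val : ℕ → Bool}
    (hsep : ∀ i j k, i < j → j < k → edgeOK i = true → edgeOK j = true → edgeOK k = true →
      ∃ v ∈ vertL, SepAt val i j k v) {T F i j k : ℕ}
    (hT : ∀ k, Nat.testBit T k = true → val k = true)
    (hF : ∀ k, Nat.testBit F k = true → val k = false) : falsT T F i j k = false := by
  by_contra hc
  rw [Bool.not_eq_false] at hc
  unfold falsT at hc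
  simp only [Bool.and_eq_true, List.all_eq_true, Nat.blt_eq] at hc
  obtain ⟨⟨⟨⟨⟨h1, h2⟩, h3⟩, h4⟩, h5⟩, h6⟩ := hc
  obtain ⟨v, hv, hs⟩ := hsep i j k h1 h2 h3 h4 h5
  have h7 := h6 v hv
  unfold falsAt at h7
  rcases hs with ⟨a, b, c, d⟩ | ⟨a, b, c, d⟩ | ⟨a, b, c, d⟩ <;>
  · rw [a, b, c] at h7
    exact d (sameB_sound hT hF h7)

theorem testBit_set {val : ℕ → Bool} {T v : ℕ} {b : Bool}
    (hT : ∀ k, Nat.testBit T k = true → val k = b) (hv : val v = b) :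
    ∀ k, Nat.testBit (T ||| 2 ^ v) k = true → val k = b := by
  intro k hk
  rw [Nat.testBit_or, Bool.or_eq_true] at hk
  rcases hk with hk | hk
  · exact hT k hk
  · rw [Nat.testBit_two_pow] at hk
    have : v = k := by simpa using hk
    rw [← this]; exact hv

theorem checkT_sound {val : ℕ → Bool}
    (hsep : ∀ i j k, i < j → j < k → edgeOK i = true → edgeOK j = true → edgeOK k = true →
      ∃ v ∈ vertL, SepAt val i j k v) (t : CaseTree) :
    ∀ T F : ℕ, (∀ k, Nat.testBit T k = true → val k = true) →
    (∀ k, Nat.testBit F k = true → val k = false) → checkT t T F = false := by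
  induction t with
  | C i j k => intro T F hT hF; exact falsT_sound hsep hT hF
  | U v b i j k t ih =>
    intro T F hT hF
    cases b
    · cases hv : val v
      · simp only [checkT, ih T _ hT (testBit_set hF hv), Bool.and_false]
      · simp only [checkT, falsT_sound hsep (testBit_set hT hv) hF, Bool.false_and]
    · cases hv : val v
      · simp only [checkT, falsT_sound hsep hT (testBit_set hF hv), Bool.false_and]
      · simp only [checkT, ih _ F (testBit_set hT hv) hF, Bool.and_false]
  | S v l r ihl ihr =>
    intro T F hT hF
    cases hv : val v
    · simp only [checkT, ihl T _ hT (testBit_set hF hv), Bool.false_and]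
    · simp only [checkT, ihr _ F (testBit_set hT hv) hF, Bool.and_false]

def theCert : CaseTree :=
  (.U 13 true 0 3 15
  (.U 52 true 3 6 18
  (.S 17
  (.U 18 true 0 1 2
  (.U 89 true 0 1 12
  (.U 90 false 0 1 13
  (.S 50
  (.U 51 true 6 7 8
  (.U 68 true 6 7 9
  (.U 69 false 6 7 10
  (.S 14
  (.U 54 false 0 6 7
  (.S 85
  (.U 86 true 7 12 13
  (.U 121 false 7 12 18
  (.U 43 true 0 7 18
  (.S 15
  (.S 70
  (.U 71 true 1 9 10
  (.U 72 true 9 10 12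
  (.U 87 true 9 11 13
  (.U 106 false 0 10 15
  (.U 36 true 0 4 15
  (.U 10 true 0 7 15
  (.U 53 false 6 7 13
  (.U 33 true 4 6 18
  (.S 25
  (.U 61 true 0 3 9
  (.U 64 true 6 9 15
  (.U 79 true 1 4 12
  (.U 28 false 4 7 9
  (.U 82 true 3 6 12
  (.S 58
  (.U 73 true 3 9 12
  (.U 109 true 6 9 18
  (.C 9 12 18)))
  (.U 94 false 9 12 15
  (.U 109 true 3 15 18
  (.U 73 true 0 12 15
  (.C 9 12 18))))))))))
  (.U 28 false 0 3 6
  (.U 79 false 1 4 12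
  (.U 82 true 3 6 12
  (.C 0 12 18)))))))))))))
  (.U 71 false 1 9 10
  (.U 72 false 9 10 12
  (.U 87 true 9 11 13
  (.U 106 true 0 10 15
  (.U 35 false 1 3 15
  (.U 53 false 6 7 13
  (.U 33 true 4 6 18
  (.U 32 true 0 3 4
  (.U 36 false 3 4 9
  (.C 3 4 8)))))))))))
  (.U 35 true 0 1 3
  (.U 87 true 3 12 13
  (.U 53 true 0 1 6
  (.C 6 7 13))))))))
  (.U 86 false 7 12 13
  (.U 121 true 7 12 18
  (.U 32 false 3 7 18
  (.S 15
  (.S 70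
  (.U 71 true 1 9 10
  (.U 87 false 9 12 13
  (.U 72 true 10 12 14
  (.U 106 false 0 10 15
  (.U 36 true 0 4 15
  (.U 53 false 7 12 14
  (.U 35 true 3 4 6
  (.U 33 false 3 4 12
  (.C 2 3 4)))))))))
  (.U 71 false 1 9 10
  (.U 106 true 1 9 15
  (.U 35 false 1 3 15
  (.U 33 false 0 3 4
  (.U 36 true 0 4 5
  (.U 53 true 3 4 6
  (.U 10 true 1 6 15
  (.S 25
  (.U 61 true 0 3 9
  (.U 28 false 0 3 18
  (.U 43 true 3 6 15
  (.U 64 true 4 6 10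
  (.C 0 6 9)))))
  (.U 61 false 0 3 9
  (.U 79 false 0 3 12
  (.U 82 false 0 12 18
  (.U 28 true 3 6 12
  (.U 43 false 0 3 6
  (.U 64 false 3 6 9
  (.C 6 9 15))))))))))))))))
  (.U 35 true 0 1 3
  (.U 87 false 3 12 13
  (.U 53 true 0 1 6
  (.C 7 12 14))))))))))
  (.U 36 false 0 1 4
  (.S 85
  (.U 86 true 4 12 13
  (.S 70
  (.U 72 false 0 1 10
  (.C 9 10 12))
  (.U 72 false 9 10 12
  (.S 15
  (.U 71 false 1 9 10
  (.C 1 9 11))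
  (.U 35 true 0 1 3
  (.U 87 true 3 12 13
  (.U 53 true 0 1 6
  (.C 6 7 13))))))))
  (.U 86 false 4 12 13
  (.U 54 false 6 7 12
  (.U 121 true 7 12 18
  (.U 43 true 0 7 18
  (.U 32 false 3 7 18
  (.S 53
  (.U 87 false 6 13 18
  (.U 15 false 0 1 6
  (.S 70
  (.U 72 false 0 1 10
  (.U 71 true 1 9 10
  (.C 10 12 14)))
  (.U 71 false 1 9 10
  (.U 72 true 1 9 11
  (.U 106 true 1 9 15
  (.S 25
  (.U 61 true 0 3 9
  (.U 64 true 6 9 15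
  (.U 10 false 0 6 9
  (.U 28 false 3 6 10
  (.C 0 4 18)))))
  (.U 79 false 0 3 12
  (.U 28 true 3 6 15
  (.U 82 false 3 6 12
  (.U 10 false 0 3 6
  (.C 0 12 18))))))))))))
  (.U 33 false 4 6 7
  (.U 87 true 7 12 14
  (.U 35 true 3 4 5
  (.C 3 12 13))))))))))))))))
  (.U 51 false 6 7 8
  (.U 68 false 6 7 9
  (.U 69 true 6 7 10
  (.S 15
  (.U 53 false 1 6 7
  (.S 71
  (.U 106 true 1 9 15
  (.U 35 false 1 3 15
  (.S 36
  (.S 87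
  (.U 121 true 6 13 18
  (.U 33 false 4 6 18
  (.U 32 true 3 4 14
  (.U 54 false 3 6 7
  (.U 86 false 7 12 18
  (.U 85 false 3 4 13
  (.C 7 12 13)))))))
  (.U 121 false 6 13 18
  (.U 43 true 1 6 18
  (.S 14
  (.U 72 false 0 10 15
  (.U 70 true 0 9 10
  (.S 25
  (.U 61 true 0 3 9
  (.U 64 true 6 9 15
  (.U 10 false 0 6 9
  (.U 28 true 0 4 18
  (.C 3 6 9)))))
  (.U 79 false 0 3 13
  (.U 28 true 3 6 15
  (.U 82 false 3 6 12
  (.U 10 false 0 3 6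
  (.C 0 12 18))))))))
  (.U 54 true 1 6 8
  (.U 32 false 3 6 7
  (.U 70 true 3 4 9
  (.U 33 true 3 4 18
  (.U 72 false 3 9 10
  (.U 85 true 3 4 13
  (.U 86 true 9 11 13
  (.C 10 12 13))))))))))))
  (.U 14 false 0 1 4
  (.U 72 false 0 10 15
  (.U 70 true 0 9 10
  (.U 32 false 3 4 6
  (.C 3 4 9))))))))
  (.U 106 false 1 9 15
  (.U 10 true 1 6 15
  (.S 32
  (.S 70
  (.U 72 true 3 9 10
  (.U 14 false 0 1 10
  (.U 54 false 0 2 7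
  (.S 85
  (.U 87 true 9 12 13
  (.U 121 false 6 13 18
  (.C 3 7 18)))
  (.U 86 false 7 12 13
  (.U 87 false 9 11 13
  (.U 121 true 6 13 18
  (.S 25
  (.U 79 true 0 3 12
  (.U 28 false 0 3 18
  (.U 43 true 3 7 15
  (.U 82 true 3 6 12
  (.C 0 6 12)))))
  (.U 61 false 0 3 9
  (.U 79 false 0 3 12
  (.U 82 false 0 12 18
  (.U 28 true 3 6 12
  (.U 43 false 0 3 6
  (.U 64 true 6 9 15
  (.C 3 7 9)))))))))))))))
  (.U 72 false 3 9 10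
  (.U 33 false 4 9 10
  (.U 14 true 0 10 15
  (.U 54 true 1 6 8
  (.U 36 false 0 1 4
  (.U 35 true 3 4 5
  (.S 85
  (.U 86 true 4 12 13
  (.C 6 7 12))
  (.U 87 false 3 12 13
  (.U 86 false 4 12 13
  (.C 10 12 14)))))))))))
  (.U 54 false 3 6 7
  (.U 14 false 1 6 8
  (.U 72 true 0 10 15
  (.U 36 true 0 4 15
  (.U 33 true 1 3 4
  (.U 35 true 3 4 6
  (.C 3 4 11))))))))))))
  (.U 35 true 0 1 3
  (.U 53 true 0 1 6
  (.U 33 true 4 6 7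
  (.S 70
  (.U 71 true 4 9 10
  (.S 14
  (.U 72 true 0 9 10
  (.C 1 9 11))
  (.U 36 false 0 1 4
  (.U 32 true 3 4 9
  (.U 54 false 3 6 7
  (.S 85
  (.U 87 true 3 12 13
  (.U 86 true 4 12 13
  (.C 7 12 14)))
  (.U 87 false 3 12 13
  (.C 6 7 13))))))))
  (.U 71 false 4 9 10
  (.C 0 1 9))))))))))))))
  (.U 18 false 0 1 2
  (.U 89 false 0 1 12
  (.U 90 true 0 1 13
  (.S 50
  (.U 51 true 6 7 8
  (.U 68 true 6 7 9
  (.U 69 false 6 7 10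
  (.S 14
  (.U 54 false 0 6 7
  (.S 72
  (.U 106 true 0 10 15
  (.U 36 false 0 4 15
  (.S 35
  (.S 86
  (.U 121 true 7 12 18
  (.U 32 false 3 7 18
  (.U 33 true 3 4 11
  (.U 53 false 4 6 7
  (.U 87 false 6 13 18
  (.U 85 false 3 4 12
  (.C 6 12 13)))))))
  (.U 121 false 7 12 18
  (.U 43 true 0 7 18
  (.S 15
  (.U 71 false 1 9 15
  (.U 70 true 1 9 10
  (.U 87 true 9 11 13
  (.U 85 false 9 12 13
  (.S 25
  (.U 61 true 0 3 9
  (.U 64 true 6 9 15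
  (.U 10 false 0 6 9
  (.U 28 true 1 3 18
  (.C 3 6 9)))))
  (.U 79 false 1 3 12
  (.U 28 true 3 6 15
  (.U 82 false 3 6 12
  (.U 10 false 0 3 6
  (.C 0 12 18))))))))))
  (.U 53 true 1 6 8
  (.U 33 false 4 6 7
  (.U 70 true 3 4 10
  (.U 32 true 3 4 11
  (.U 71 false 4 9 10
  (.U 85 true 3 4 12
  (.U 87 true 9 11 13
  (.C 9 12 13))))))))))))
  (.U 15 false 0 1 3
  (.U 71 false 1 9 15
  (.U 70 true 1 9 10
  (.U 33 false 3 4 7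
  (.C 3 4 10))))))))
  (.U 106 false 0 10 15
  (.U 10 true 0 7 15
  (.S 33
  (.S 70
  (.U 71 true 4 9 10
  (.U 15 false 0 1 9
  (.U 53 false 0 2 7
  (.S 85
  (.U 87 true 6 12 13
  (.U 121 false 6 13 18
  (.C 4 6 18)))
  (.U 87 false 6 12 13
  (.U 121 true 6 13 18
  (.U 32 false 3 7 18
  (.S 25
  (.U 79 true 0 3 12
  (.U 28 false 0 3 18
  (.U 43 true 4 6 15
  (.U 82 true 3 6 12
  (.C 0 6 12)))))
  (.U 61 false 0 3 9
  (.U 79 false 0 3 12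
  (.U 82 false 0 12 18
  (.U 28 true 3 6 12
  (.U 43 false 0 3 6
  (.U 64 true 6 9 15
  (.C 3 6 10)))))))))))))))
  (.U 32 false 3 9 10
  (.U 71 false 4 9 10
  (.U 15 true 1 9 15
  (.U 53 true 1 6 8
  (.U 35 false 0 1 3
  (.U 36 true 3 4 5
  (.S 85
  (.U 87 true 3 12 13
  (.C 6 7 13))
  (.U 87 false 3 12 13
  (.U 86 false 4 12 13
  (.C 10 12 14)))))))))))
  (.U 53 false 4 6 7
  (.U 15 false 1 6 8
  (.U 71 true 1 9 15
  (.U 35 true 1 3 15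
  (.U 36 true 3 4 7
  (.U 32 false 4 5 9
  (.C 0 3 4))))))))))))
  (.U 36 true 0 1 4
  (.U 54 true 0 1 7
  (.U 32 true 3 6 7
  (.S 70
  (.U 72 true 3 9 10
  (.S 15
  (.U 71 true 1 9 10
  (.C 1 9 11))
  (.U 35 false 0 1 3
  (.U 33 true 3 4 10
  (.U 53 false 4 6 7
  (.S 85
  (.U 87 true 3 12 13
  (.U 86 true 4 12 13
  (.C 7 12 14)))
  (.U 86 false 4 12 13
  (.C 6 7 12))))))))
  (.U 72 false 3 9 10
  (.C 0 1 10))))))))))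
  (.U 51 false 6 7 8
  (.U 68 false 6 7 9
  (.U 69 true 6 7 10
  (.S 14
  (.S 70
  (.U 72 true 0 9 10
  (.U 106 false 0 10 15
  (.S 53
  (.S 85
  (.U 87 true 6 12 13
  (.U 71 true 9 10 13
  (.U 86 true 9 11 13
  (.U 121 false 6 13 18
  (.U 15 false 0 1 9
  (.U 35 true 1 3 15
  (.U 10 true 1 6 15
  (.U 43 true 1 6 18
  (.U 54 false 6 7 12
  (.U 32 true 3 7 18
  (.S 25
  (.U 61 true 0 3 9
  (.U 64 true 6 9 15
  (.U 79 true 0 3 13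
  (.U 28 false 3 6 10
  (.U 82 true 3 6 12
  (.S 58
  (.U 73 true 3 9 12
  (.U 109 true 6 9 18
  (.C 9 12 18)))
  (.U 94 false 9 12 15
  (.U 109 true 3 15 18
  (.U 73 true 0 12 15
  (.C 9 12 18))))))))))
  (.U 28 false 0 3 6
  (.U 79 false 0 3 13
  (.U 82 true 3 6 12
  (.C 0 12 18)))))))))))))))
  (.U 87 false 6 12 13
  (.U 86 false 10 12 13
  (.U 71 true 10 12 14
  (.U 121 true 6 13 18
  (.U 15 false 0 1 9
  (.U 35 true 1 3 15
  (.U 33 false 4 6 18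
  (.U 54 false 7 12 14
  (.U 36 true 3 4 7
  (.U 32 false 3 4 13
  (.C 0 4 5))))))))))))
  (.U 33 true 4 6 7
  (.U 71 true 4 9 10
  (.U 15 false 0 1 9
  (.C 1 6 7)))))))
  (.U 72 false 0 9 10
  (.U 106 true 0 10 15
  (.U 36 false 0 4 15
  (.S 53
  (.S 85
  (.U 87 true 6 12 13
  (.U 71 false 9 10 13
  (.U 86 true 9 11 13
  (.U 121 false 6 13 18
  (.U 15 false 1 9 11
  (.U 54 false 6 7 12
  (.U 32 true 3 7 18
  (.U 33 true 1 3 4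
  (.U 35 false 3 4 10
  (.C 3 4 11))))))))))
  (.U 87 false 6 12 13
  (.U 121 true 6 13 18
  (.U 33 false 4 6 18
  (.S 15
  (.U 32 false 1 3 4
  (.U 35 true 2 3 4
  (.U 54 true 3 4 7
  (.U 10 true 0 7 15
  (.S 25
  (.U 61 true 0 3 9
  (.U 28 false 0 3 18
  (.U 43 true 3 6 15
  (.U 64 true 3 7 9
  (.C 0 6 9)))))
  (.U 61 false 0 3 9
  (.U 79 false 0 3 12
  (.U 82 false 0 12 18
  (.U 28 true 3 6 12
  (.U 43 false 0 3 6
  (.U 64 false 3 6 9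
  (.C 6 9 15))))))))))))
  (.U 35 false 0 1 3
  (.U 43 true 1 6 18
  (.U 71 true 1 9 11
  (.S 25
  (.U 61 true 0 3 9
  (.U 64 true 6 9 15
  (.U 10 false 0 6 9
  (.U 28 false 4 7 9
  (.C 1 3 18)))))
  (.U 79 false 0 3 12
  (.U 28 true 3 6 15
  (.U 82 false 3 6 12
  (.U 10 false 0 3 6
  (.C 0 12 18))))))))))))))
  (.U 33 true 4 6 7
  (.U 71 false 4 9 10
  (.U 15 true 1 6 7
  (.C 1 9 11)))))))))
  (.U 36 true 0 1 4
  (.U 54 true 0 1 7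
  (.S 85
  (.U 86 true 4 12 13
  (.C 6 7 12))
  (.U 86 false 4 12 13
  (.S 15
  (.U 53 false 1 6 7
  (.U 87 false 6 12 13
  (.C 7 12 14)))
  (.U 35 false 0 1 3
  (.U 87 false 3 12 13
  (.U 53 false 6 7 13
  (.C 7 12 14))))))))))))))))))))

theorem theCert_ok : checkT theCert 0 1 = true := by decide +kernel

theorem no_symmetric_theta (val : ℕ → Bool) (h0 : val 0 = false)
    (hsep : ∀ i j k, i < j → j < k → edgeOK i = true → edgeOK j = true → edgeOK k = true →
      ∃ v ∈ vertL, SepAt val i j k v) : False := by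
  have h := checkT_sound hsep theCert 0 1 (by simp) (by
    intro k hk
    have : k = 0 := by simpa [Nat.testBit_one_eq_true_iff_self_eq_zero] using hk
    rw [this]; exact h0)
  rw [theCert_ok] at h
  exact Bool.noConfusion h

/-! ### Part 2: Ramsey and the theta configuration -/

theorem ramsey_aux {κ : Type} [DecidableEq κ] (m : ℕ) :
    ∃ N : ℕ, ∀ (c : ℕ → ℕ → κ) (K : Finset κ) (S : Finset ℕ), K.card ≤ m → N ≤ S.card →
      (∀ i ∈ S, ∀ j ∈ S, i < j → c i j ∈ K) →
      ∃ i ∈ S, ∃ j ∈ S, ∃ k ∈ S, i < j ∧ j < k ∧ c i j = c i k ∧ c i j = c j k := by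
  induction m with
  | zero =>
    refine ⟨2, fun c K S hK hS h => ?_⟩
    have hK0 : K = ∅ := by simpa using hK
    obtain ⟨a, ha, b, hb, hab⟩ := Finset.one_lt_card.1 (show 1 < S.card by omega)
    rcases lt_or_gt_of_ne hab with h1 | h1
    · have := h a ha b hb h1; simp [hK0] at this
    · have := h b hb a ha h1; simp [hK0] at this
  | succ m ih =>
    obtain ⟨N, hN⟩ := ih
    refine ⟨(m + 1) * N + 2, fun c K S hK hS h => ?_⟩
    have hne : S.Nonempty := Finset.card_pos.1 (by omega)
    set i := S.min' hne with hi
    have hiS : i ∈ S := Finset.min'_mem _ _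
    have hlt : ∀ j ∈ S.erase i, i < j := by
      intro j hj
      exact lt_of_le_of_ne (Finset.min'_le _ _ (Finset.mem_of_mem_erase hj))
        (Finset.ne_of_mem_erase hj).symm
    have hcard : (S.erase i).card = S.card - 1 := Finset.card_erase_of_mem hiS
    obtain ⟨χ, hχ, hfib⟩ := Finset.exists_lt_card_fiber_of_mul_lt_card_of_maps_to
      (s := S.erase i) (t := K) (f := fun j => c i j) (n := N)
      (fun j hj => h i hiS j (Finset.mem_of_mem_erase hj) (hlt j hj)) (by
        have : K.card * N ≤ (m + 1) * N := Nat.mul_le_mul_right _ hK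
        omega)
    set S' := (S.erase i).filter (fun j => c i j = χ) with hS'
    have hS'S : ∀ j ∈ S', j ∈ S ∧ i < j ∧ c i j = χ := by
      intro j hj
      rw [hS', Finset.mem_filter] at hj
      exact ⟨Finset.mem_of_mem_erase hj.1, hlt j hj.1, hj.2⟩
    by_cases hex : ∃ j ∈ S', ∃ k ∈ S', j < k ∧ c j k = χ
    · obtain ⟨j, hj, k, hk, hjk, hc⟩ := hex
      obtain ⟨a1, a2, a3⟩ := hS'S j hj
      obtain ⟨b1, b2, b3⟩ := hS'S k hk
      exact ⟨i, hiS, j, a1, k, b1, a2, hjk, by rw [a3, b3], by rw [a3, hc]⟩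
    · push Not at hex
      obtain ⟨a, ha, b, hb, d, hd, hh⟩ := hN c (K.erase χ) S'
        (by rw [Finset.card_erase_of_mem hχ]; omega) hfib.le
        (fun j hj k hk hjk => Finset.mem_erase.2
          ⟨hex j hj k hk hjk, h j (hS'S j hj).1 k (hS'S k hk).1 hjk⟩)
      exact ⟨a, (hS'S a ha).1, b, (hS'S b hb).1, d, (hS'S d hd).1, hh⟩

theorem ramsey_three (κ : Type) [Fintype κ] [DecidableEq κ] :
    ∃ N : ℕ, ∀ c : ℕ → ℕ → κ, ∃ i j k, i < j ∧ j < k ∧ k < N ∧ c i j = c i k ∧ c i j = c j k := by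
  obtain ⟨N, hN⟩ := ramsey_aux (κ := κ) (Fintype.card κ)
  refine ⟨N, fun c => ?_⟩
  obtain ⟨i, -, j, -, k, hk, h1, h2, h3, h4⟩ := hN c Finset.univ (Finset.range N)
    (by simp [Finset.card_univ]) (by simp) (by simp)
  exact ⟨i, j, k, h1, h2, Finset.mem_range.1 hk, h3, h4⟩

/-- Any three distinct edges are separated at some vertex. -/
def TriSep {V : Type} (E : Finset V → Prop) (f : Finset V → V → Bool) : Prop :=
  ∀ e₁ e₂ e₃ : Finset V, E e₁ → E e₂ → E e₃ → e₁ ≠ e₂ → e₁ ≠ e₃ → e₂ ≠ e₃ →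
    ∃ v, (v ∈ e₁ ∧ v ∉ e₂ ∧ v ∉ e₃ ∧ f e₂ v ≠ f e₃ v) ∨
      (v ∉ e₁ ∧ v ∈ e₂ ∧ v ∉ e₃ ∧ f e₁ v ≠ f e₃ v) ∨
      (v ∉ e₁ ∧ v ∉ e₂ ∧ v ∈ e₃ ∧ f e₁ v ≠ f e₂ v)

def refE (u : ℕ) : ℕ :=
  match u with
  | 0 => 0 | 1 => 0 | 2 => 6 | 3 => 5 | 4 => 5 | _ => 6

/-- The edge of type `s` with index `p`. -/
def edgeF {V : Type} [DecidableEq V] (φ : ℕ → ℕ → V) (s p : ℕ) : Finset V :=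
  {φ (epA s) p, φ (epB s) p}

theorem epA_lt (s : ℕ) : epA s < 6 := by
  unfold epA; split <;> norm_num

theorem epB_lt (s : ℕ) : epB s < 6 := by
  unfold epB; split <;> norm_num

theorem ep_fix (s : ℕ) (hs : 5 ≤ s) : epA s < 4 ∧ epB s < 4 := by
  unfold epA epB
  match s, hs with
  | 5, _ => simp
  | (n + 6), _ => simp

/-- Normalised bits. -/
def gBit {V : Type} [DecidableEq V] (f : Finset V → V → Bool) (φ : ℕ → ℕ → V)
    (s p u p' : ℕ) : Bool :=
  xor (f (edgeF φ s p) (φ u p')) (f (edgeF φ (refE u) 0) (φ u p'))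

theorem cert_distinct : ∀ i ∈ List.range 19, ∀ j ∈ List.range 19, edgeOK i = true → edgeOK j = true → i ≠ j →
    ∃ v ∈ vertL, incB (i / 3) (i % 3) v.1 v.2 ≠ incB (j / 3) (j % 3) v.1 v.2 := by
  decide +kernel

theorem vertL_lt : ∀ v ∈ vertL, v.1 < 6 ∧ v.2 < 3 := by decide

theorem mem_vertL : ∀ u ∈ List.range 6, ∀ p ∈ List.range 3, (u, p) ∈ vertL ∨ (u < 4 ∧ (u, 0) ∈ vertL) := by decide

theorem edgeOK_lt {i : ℕ} (h : edgeOK i = true) : i < 19 := by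
  unfold edgeOK at h
  simp only [Bool.or_eq_true, Nat.ble_eq, beq_iff_eq] at h
  omega

theorem exists_no_theta : ∃ K : ℕ, ∀ {V : Type} [DecidableEq V] (E : Finset V → Prop)
    (f : Finset V → V → Bool), TriSep E f → ∀ φ : ℕ → ℕ → V,
    (∀ u p, u < 4 → φ u p = φ u 0) →
    (∀ u u' p p', u < 6 → u' < 6 → p < K → p' < K → φ u p = φ u' p' → u = u' ∧ (u < 4 ∨ p = p')) →
    (∀ s p, s < 7 → p < K → E (edgeF φ s p)) →
    (∀ s p u, s ≤ 2 → u ≤ 1 → p < K → f (edgeF φ s p) (φ u 0) = f (edgeF φ 0 0) (φ u 0)) →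
    False := by
  obtain ⟨K, hK⟩ := ramsey_three (Fin 7 → Fin 6 → (Bool × Bool × Bool × Bool))
  refine ⟨K, ?_⟩
  intro V _ E f hP φ hfix hinj hE hcls
  obtain ⟨i0, i1, i2, h01, h12, h2K, hc1, hc2⟩ := hK (fun i j s u =>
    (gBit f φ s i u i, gBit f φ s i u j, gBit f φ s j u i, gBit f φ s j u j))
  have hfixE : ∀ s p, 5 ≤ s → edgeF φ s p = edgeF φ s 0 := by
    intro s p hs
    unfold edgeF
    rw [hfix _ p (ep_fix s hs).1, hfix _ p (ep_fix s hs).2]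
  have hg1 : ∀ s p p' u q, 5 ≤ s → gBit f φ s p u q = gBit f φ s p' u q := by
    intro s p p' u q hs
    unfold gBit
    rw [hfixE s p hs, hfixE s p' hs]
  have hg2 : ∀ s p u q q', u < 4 → gBit f φ s p u q = gBit f φ s p u q' := by
    intro s p u q q' hu
    unfold gBit
    rw [hfix u q hu, hfix u q' hu]
  have A : ∀ s u, s < 7 → u < 6 →
      (gBit f φ s i0 u i1 = gBit f φ s i0 u i2 ∧ gBit f φ s i1 u i0 = gBit f φ s i2 u i0 ∧
       gBit f φ s i1 u i1 = gBit f φ s i2 u i2 ∧ gBit f φ s i0 u i0 = gBit f φ s i1 u i1 ∧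
       gBit f φ s i0 u i1 = gBit f φ s i1 u i2 ∧ gBit f φ s i1 u i0 = gBit f φ s i2 u i1) := by
    intro s u hs hu
    have a := congrFun (congrFun hc1 ⟨s, hs⟩) ⟨u, hu⟩
    have b := congrFun (congrFun hc2 ⟨s, hs⟩) ⟨u, hu⟩
    simp only [Prod.mk.injEq] at a b
    tauto
  clear hc1 hc2
  set idx : ℕ → ℕ := fun p => if p = 0 then i0 else if p = 1 then i1 else i2 with hidx
  have hidxK : ∀ p, idx p < K := by
    intro p; simp only [hidx]; split_ifs <;> omega
  have hidx_inj : ∀ p p', p < 3 → p' < 3 → idx p = idx p' → p = p' := by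
    intro p p' hp hp' h
    simp only [hidx] at h
    split_ifs at h <;> omega
  set val : ℕ → Bool := fun k => if k = 0 then false else
    if (k - 1) % 3 = 0 then gBit f φ ((k - 1) / 18) i0 ((k - 1) / 3 % 6) i0
    else if (k - 1) % 3 = 1 then gBit f φ ((k - 1) / 18) i0 ((k - 1) / 3 % 6) i1
    else gBit f φ ((k - 1) / 18) i1 ((k - 1) / 3 % 6) i0 with hval
  have hvalkey : ∀ s u rel, s < 7 → u < 6 → rel < 3 → val (1 + (s * 6 + u) * 3 + rel) =
      if rel = 0 then gBit f φ s i0 u i0 else if rel = 1 then gBit f φ s i0 u i1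
      else gBit f φ s i1 u i0 := by
    intro s u rel hs hu hrel
    have e1 : 1 + (s * 6 + u) * 3 + rel - 1 = (s * 6 + u) * 3 + rel := by omega
    have e2 : ((s * 6 + u) * 3 + rel) % 3 = rel := by omega
    have e3 : ((s * 6 + u) * 3 + rel) / 18 = s := by omega
    have e4 : ((s * 6 + u) * 3 + rel) / 3 % 6 = u := by omega
    simp only [hval, e1, e2, e3, e4]
    rw [if_neg (by omega)]
  have hkey : ∀ s u p p', s < 7 → u < 6 → p < 3 → p' < 3 →
      val (keyN s p u p') = gBit f φ s (idx p) u (idx p') := by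
    intro s u p p' hs hu hp hp'
    obtain ⟨A1, A2, A3, A4, A5, A6⟩ := A s u hs hu
    have hdiag : ∀ p, gBit f φ s (idx p) u (idx p) = gBit f φ s i0 u i0 := by
      intro p
      simp only [hidx]
      split_ifs
      · rfl
      · exact A4.symm
      · rw [A4, A3]
    unfold keyN
    split_ifs with c1 c2 c3 c4
    · simp only [Bool.and_eq_true, Nat.ble_eq] at c1
      have hr : refE u = 0 := by
        unfold refE
        have : u = 0 ∨ u = 1 := by omega
        rcases this with rfl | rfl <;> rfl
      have : gBit f φ s (idx p) u (idx p') = false := by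
        unfold gBit
        rw [hr, hfix u (idx p') (by omega), hcls s (idx p) u c1.1 c1.2 (hidxK p)]
        simp
      rw [this]; simp [hval]
    · simp only [Bool.or_eq_true, Bool.and_eq_true, beq_iff_eq] at c2
      have hr : refE u = s ∧ 5 ≤ s := by
        unfold refE
        rcases c2 with ((⟨rfl, rfl⟩ | ⟨rfl, rfl⟩) | ⟨rfl, rfl⟩) | ⟨rfl, rfl⟩ <;> simp
      have : gBit f φ s (idx p) u (idx p') = false := by
        unfold gBit
        rw [hr.1, hfixE s _ hr.2]
        simp
      rw [this]; simp [hval]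
    · rw [hvalkey s u 0 hs hu (by norm_num)]
      simp only [if_true]
      simp only [Bool.or_eq_true, Nat.ble_eq, Nat.blt_eq, beq_iff_eq] at c3
      rcases c3 with (c3 | c3) | c3
      · rw [hg1 s (idx p) (idx p') u _ c3, hdiag]
      · rw [hg2 s _ u (idx p') (idx p) c3, hdiag]
      · rw [c3, hdiag]
    · rw [hvalkey s u 1 hs hu (by norm_num)]
      simp only [Nat.blt_eq] at c4
      have : (p = 0 ∧ p' = 1) ∨ (p = 0 ∧ p' = 2) ∨ (p = 1 ∧ p' = 2) := by omega
      rcases this with ⟨rfl, rfl⟩ | ⟨rfl, rfl⟩ | ⟨rfl, rfl⟩ <;> simp [hidx, A1, ← A5]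
    · rw [hvalkey s u 2 hs hu (by norm_num)]
      simp only [Nat.blt_eq] at c4
      simp only [Bool.or_eq_true, Nat.ble_eq, Nat.blt_eq, beq_iff_eq] at c3
      have : (p = 1 ∧ p' = 0) ∨ (p = 2 ∧ p' = 0) ∨ (p = 2 ∧ p' = 1) := by omega
      rcases this with ⟨rfl, rfl⟩ | ⟨rfl, rfl⟩ | ⟨rfl, rfl⟩ <;> simp [hidx, A2, ← A6]
  -- membership
  have hmem : ∀ s u p p', u < 6 → p < 3 → p' < 3 →
      (φ u (idx p') ∈ edgeF φ s (idx p) ↔ incB s p u p' = true) := by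
    intro s u p p' hu hp hp'
    unfold edgeF incB
    simp only [Finset.mem_insert, Finset.mem_singleton, Bool.and_eq_true, Bool.or_eq_true,
      beq_iff_eq, Nat.blt_eq]
    constructor
    · rintro (h | h)
      · obtain ⟨h1, h2⟩ := hinj _ _ _ _ hu (epA_lt s) (hidxK _) (hidxK _) h
        exact ⟨Or.inl h1, h2.imp_right fun h => (hidx_inj _ _ hp' hp h).symm⟩
      · obtain ⟨h1, h2⟩ := hinj _ _ _ _ hu (epB_lt s) (hidxK _) (hidxK _) h
        exact ⟨Or.inr h1, h2.imp_right fun h => (hidx_inj _ _ hp' hp h).symm⟩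
    · rintro ⟨h1, h2⟩
      have : φ u (idx p') = φ u (idx p) := by
        rcases h2 with h2 | h2
        · rw [hfix u _ h2, hfix u (idx p) h2]
        · rw [h2]
      rw [this]
      rcases h1 with h1 | h1
      · left; rw [h1]
      · right; rw [h1]
  have hvert : ∀ s p v, p < 3 → v ∈ edgeF φ s (idx p) → ∃ w ∈ vertL, v = φ w.1 (idx w.2) := by
    intro s p v hp hv
    have key : ∀ u, u < 6 → ∃ w ∈ vertL, φ u (idx p) = φ w.1 (idx w.2) := by
      intro u hu
      rcases mem_vertL u (List.mem_range.2 hu) p (List.mem_range.2 hp) with h | ⟨h1, h⟩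
      · exact ⟨_, h, rfl⟩
      · exact ⟨_, h, by rw [hfix u _ h1]; exact (hfix u _ h1).symm⟩
    unfold edgeF at hv
    simp only [Finset.mem_insert, Finset.mem_singleton] at hv
    rcases hv with rfl | rfl
    · exact key _ (epA_lt s)
    · exact key _ (epB_lt s)
  have hdist : ∀ i j, edgeOK i = true → edgeOK j = true → i < j →
      edgeF φ (i / 3) (idx (i % 3)) ≠ edgeF φ (j / 3) (idx (j % 3)) := by
    intro i j hi hj hij heq
    obtain ⟨v, hv, hne⟩ := cert_distinct i (List.mem_range.2 (edgeOK_lt hi)) j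
      (List.mem_range.2 (edgeOK_lt hj)) hi hj hij.ne
    obtain ⟨v1, v2⟩ := vertL_lt v hv
    apply hne
    rw [Bool.eq_iff_iff, ← hmem _ _ _ _ v1 (by omega) v2, ← hmem _ _ _ _ v1 (by omega) v2, heq]
  apply no_symmetric_theta val (by simp [hval])
  intro i j k hij hjk hi hj hk
  have li := edgeOK_lt hi
  have lj := edgeOK_lt hj
  have lk := edgeOK_lt hk
  obtain ⟨v, hv⟩ := hP (edgeF φ (i / 3) (idx (i % 3))) (edgeF φ (j / 3) (idx (j % 3)))
    (edgeF φ (k / 3) (idx (k % 3))) (hE _ _ (by omega) (hidxK _)) (hE _ _ (by omega) (hidxK _))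
    (hE _ _ (by omega) (hidxK _)) (hdist i j hi hj hij) (hdist i k hi hk (hij.trans hjk))
    (hdist j k hj hk hjk)
  have hw : ∃ w ∈ vertL, v = φ w.1 (idx w.2) := by
    rcases hv with ⟨h, -⟩ | ⟨-, h, -⟩ | ⟨-, -, h, -⟩ <;> exact hvert _ _ _ (by omega) h
  obtain ⟨w, hwL, rfl⟩ := hw
  obtain ⟨w1, w2⟩ := vertL_lt w hwL
  refine ⟨w, hwL, ?_⟩
  unfold SepAt
  have m1 : i % 3 < 3 := by omega
  have m2 : j % 3 < 3 := by omega
  have m3 : k % 3 < 3 := by omega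
  rw [hmem _ _ _ _ w1 m1 w2, hmem _ _ _ _ w1 m2 w2, hmem _ _ _ _ w1 m3 w2] at hv
  rw [hkey _ _ _ _ (by omega) w1 m1 w2, hkey _ _ _ _ (by omega) w1 m2 w2,
    hkey _ _ _ _ (by omega) w1 m3 w2]
  unfold gBit
  simp only [Bool.not_eq_true, ne_eq, Bool.xor_left_inj] at hv ⊢
  exact hv

/-! ### Part 3: local structure of the graph -/

section Local

variable {V : Type} [DecidableEq V]

def AdjE (E : Finset V → Prop) (u v : V) : Prop := u ≠ v ∧ E {u, v}

theorem AdjE.symm {E : Finset V → Prop} {u v : V} (h : AdjE E u v) : AdjE E v u :=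
  ⟨h.1.symm, by rw [Finset.pair_comm]; exact h.2⟩

theorem no_triangle {E : Finset V → Prop} {f : Finset V → V → Bool} (hP : TriSep E f)
    {u v w : V} (h1 : AdjE E u v) (h2 : AdjE E v w) (h3 : AdjE E u w) : False := by
  obtain ⟨a1, b1⟩ := h1
  obtain ⟨a2, b2⟩ := h2
  obtain ⟨a3, b3⟩ := h3
  have d1 : ({u, v} : Finset V) ≠ {v, w} := by
    intro h
    have : u ∈ ({v, w} : Finset V) := by rw [← h]; simp
    simp only [Finset.mem_insert, Finset.mem_singleton] at this
    tauto
  have d2 : ({u, v} : Finset V) ≠ {u, w} := by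
    intro h
    have : v ∈ ({u, w} : Finset V) := by rw [← h]; simp
    simp only [Finset.mem_insert, Finset.mem_singleton] at this
    rcases this with h | h
    · exact a1 h.symm
    · exact a2 h
  have d3 : ({v, w} : Finset V) ≠ {u, w} := by
    intro h
    have : v ∈ ({u, w} : Finset V) := by rw [← h]; simp
    simp only [Finset.mem_insert, Finset.mem_singleton] at this
    rcases this with h | h
    · exact a1 h.symm
    · exact a2 h
  obtain ⟨z, hz⟩ := hP _ _ _ b1 b2 b3 d1 d2 d3
  simp only [Finset.mem_insert, Finset.mem_singleton] at hz
  tauto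

theorem path_lemma {E : Finset V → Prop} {f : Finset V → V → Bool} (hP : TriSep E f)
    {p q r s : V} (h1 : AdjE E p q) (h2 : AdjE E q r) (h3 : AdjE E r s) (hpr : p ≠ r)
    (hps : p ≠ s) (hqs : q ≠ s) :
    f {p, q} s ≠ f {q, r} s ∨ f {q, r} p ≠ f {r, s} p := by
  obtain ⟨a1, b1⟩ := h1
  obtain ⟨a2, b2⟩ := h2
  obtain ⟨a3, b3⟩ := h3
  have d1 : ({p, q} : Finset V) ≠ {q, r} := by
    intro h
    have : p ∈ ({q, r} : Finset V) := by rw [← h]; simp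
    simp only [Finset.mem_insert, Finset.mem_singleton] at this
    tauto
  have d2 : ({p, q} : Finset V) ≠ {r, s} := by
    intro h
    have : p ∈ ({r, s} : Finset V) := by rw [← h]; simp
    simp only [Finset.mem_insert, Finset.mem_singleton] at this
    tauto
  have d3 : ({q, r} : Finset V) ≠ {r, s} := by
    intro h
    have : q ∈ ({r, s} : Finset V) := by rw [← h]; simp
    simp only [Finset.mem_insert, Finset.mem_singleton] at this
    tauto
  obtain ⟨z, hz⟩ := hP _ _ _ b1 b2 b3 d1 d2 d3
  simp only [Finset.mem_insert, Finset.mem_singleton, not_or] at hz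
  rcases hz with ⟨h1 | h1, h2, h3, h4⟩ | ⟨h1, h2 | h2, h3, h4⟩ | ⟨h1, h2, h3 | h3, h4⟩
  · subst h1; exact Or.inr h4
  · exact absurd h1 h2.1
  · exact absurd h2 h1.2
  · exact absurd h2 h3.1
  · exact absurd h3 h2.2
  · subst h3; exact Or.inl h4

/-- The 4-cycle lemma. -/
theorem cycle_lemma {E : Finset V → Prop} {f : Finset V → V → Bool} (hP : TriSep E f)
    {p q r s : V} (h1 : AdjE E p q) (h2 : AdjE E q r) (h3 : AdjE E r s) (h4 : AdjE E s p)
    (hpr : p ≠ r) (hqs : q ≠ s) :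
    (f {q, r} p ≠ f {r, s} p ∧ f {s, p} r ≠ f {p, q} r) ∨
    (f {r, s} q ≠ f {s, p} q ∧ f {p, q} s ≠ f {q, r} s) := by
  have a := path_lemma hP h1 h2 h3 hpr h4.1.symm hqs
  have b := path_lemma hP h2 h3 h4 hqs h1.1.symm hpr.symm
  have c := path_lemma hP h3 h4 h1 hpr.symm h2.1.symm hqs.symm
  have d := path_lemma hP h4 h1 h2 hqs.symm h3.1.symm hpr
  tauto

/-- The edges between the neighbourhoods of `x` and `y`, with prescribed bits at `x` and `y`. -/
def Cl (E : Finset V → Prop) (f : Finset V → V → Bool) (x y : V) (X Y : Bool) (q r : V) : Prop :=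
  AdjE E x q ∧ AdjE E q r ∧ AdjE E r y ∧ q ≠ y ∧ r ≠ x ∧ f {q, r} x = X ∧ f {q, r} y = Y

theorem bool_two : ∀ a b c : Bool, a ≠ c → b ≠ c → a = b := by decide

theorem Cl_no_C4 {E : Finset V → Prop} {f : Finset V → V → Bool} (hP : TriSep E f)
    {x y : V} {X Y : Bool} {q q' r r' : V} (h1 : Cl E f x y X Y q r) (h2 : Cl E f x y X Y q r')
    (h3 : Cl E f x y X Y q' r) (h4 : Cl E f x y X Y q' r') (hq : q ≠ q') (hr : r ≠ r') : False := by
  obtain ⟨a1, a2, a3, a4, a5, a6, a7⟩ := h1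
  obtain ⟨b1, b2, b3, b4, b5, b6, b7⟩ := h2
  obtain ⟨c1, c2, c3, c4, c5, c6, c7⟩ := h3
  obtain ⟨d1, d2, d3, d4, d5, d6, d7⟩ := h4
  have e1 := cycle_lemma hP a1 a2 c2.symm c1.symm a5.symm hq
  have e2 := cycle_lemma hP b1 b2 d2.symm d1.symm b5.symm hq
  have e3 := cycle_lemma hP a3.symm a2.symm b2 b3 a4.symm hr
  have e4 := cycle_lemma hP c3.symm c2.symm d2 d3 c4.symm hr
  have e5 := cycle_lemma hP a2 c2.symm d2 b2.symm hq hr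
  rw [Finset.pair_comm r q'] at e1
  rw [Finset.pair_comm r' q'] at e2
  rw [Finset.pair_comm r q] at e3
  rw [Finset.pair_comm r q'] at e4
  rw [Finset.pair_comm r q', Finset.pair_comm r' q] at e5
  rw [Finset.pair_comm y r] at e3 e4
  rw [Finset.pair_comm x q] at e1 e2
  generalize f {q, r} = A at *
  generalize f {q, r'} = B at *
  generalize f {q', r} = C at *
  generalize f {q', r'} = D at *
  generalize f {q', x} = F at *
  generalize f {q, x} = G at *
  generalize f {r, y} = H at *
  generalize f {r', y} = I at *
  have z1 : A x = C x := by rw [a6, c6]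
  have z2 : B x = D x := by rw [b6, d6]
  have z3 : A y = B y := by rw [a7, b7]
  have z4 : C y = D y := by rw [c7, d7]
  clear hP a1 a2 a3 b1 b2 b3 c1 c2 c3 d1 d2 d3
  have f1 : C q = D q := bool_two _ _ (F q) (by tauto) (by tauto)
  have f2 : D r = B r := bool_two _ _ (I r) (by tauto) (by tauto)
  rcases e5 with e5 | e5
  · tauto
  · tauto

theorem exists_path_bound : ∃ K : ℕ, ∀ {V : Type} [DecidableEq V] (E : Finset V → Prop)
    (f : Finset V → V → Bool), TriSep E f → ∀ (x y : V) (X Y : Bool) (a b : V)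
    (P : Finset (V × V)), (∀ z ∈ P, Cl E f x y X Y a z.2 ∧ Cl E f x y X Y z.1 z.2 ∧
      Cl E f x y X Y z.1 b ∧ z.1 ≠ a ∧ z.2 ≠ b) → P.card ≤ K := by
  obtain ⟨K, hK⟩ := exists_no_theta
  refine ⟨K, ?_⟩
  intro V _ E f hP x y X Y a b P hPP
  by_contra hcard
  push Not at hcard
  have hex : ∃ h : ℕ → V × V, (∀ p < K, h p ∈ P) ∧
      (∀ p < K, ∀ p' < K, h p = h p' → p = p') := by
    refine ⟨fun p => if hp : p < P.card then (P.equivFin.symm ⟨p, hp⟩).1 else (a, a), ?_, ?_⟩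
    · intro p hp
      have : p < P.card := hp.trans hcard
      simp only [this, dif_pos]
      exact (P.equivFin.symm ⟨p, this⟩).2
    · intro p hp p' hp' heq
      have h1 : p < P.card := hp.trans hcard
      have h2 : p' < P.card := hp'.trans hcard
      simp only [h1, h2, dif_pos] at heq
      have := P.equivFin.symm.injective (Subtype.ext heq)
      simpa using this
  obtain ⟨h, hmem, hinj⟩ := hex
  set φ : ℕ → ℕ → V := fun u p =>
    match u with
    | 0 => x | 1 => y | 2 => a | 3 => b | 4 => (h p).1 | _ => (h p).2 with hφ
  have F := fun p hp => hPP _ (hmem p hp)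
  have tri := fun {u v w : V} => no_triangle (u := u) (v := v) (w := w) hP
  have hqq : ∀ p < K, ∀ p' < K, (h p).1 = (h p').1 → p = p' := by
    intro p hp p' hp' heq
    obtain ⟨a1, a2, a3, a4, a5⟩ := F p hp
    obtain ⟨b1, b2, b3, b4, b5⟩ := F p' hp'
    by_contra hne
    have hr : (h p).2 ≠ (h p').2 := fun h' => hne (hinj p hp p' hp' (Prod.ext heq h'))
    rw [← heq] at b2
    exact Cl_no_C4 hP a2 b2 a1 b1 a4 hr
  have hrr : ∀ p < K, ∀ p' < K, (h p).2 = (h p').2 → p = p' := by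
    intro p hp p' hp' heq
    obtain ⟨a1, a2, a3, a4, a5⟩ := F p hp
    obtain ⟨b1, b2, b3, b4, b5⟩ := F p' hp'
    by_contra hne
    have hr : (h p).1 ≠ (h p').1 := fun h' => hne (hinj p hp p' hp' (Prod.ext h' heq))
    rw [← heq] at b2
    exact Cl_no_C4 hP a2 a3 b2 b3 hr a5
  have hqr : ∀ p < K, ∀ p' < K, (h p).1 ≠ (h p').2 := by
    intro p hp p' hp' heq
    obtain ⟨a1, a2, a3, a4, a5⟩ := F p hp
    obtain ⟨b1, b2, b3, b4, b5⟩ := F p' hp'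
    have := a2.1
    rw [heq] at this
    exact tri b1.1 b1.2.1 this
  have H : ∀ p < K, x ≠ y ∧ x ≠ a ∧ x ≠ b ∧ y ≠ a ∧ y ≠ b ∧ a ≠ b ∧ x ≠ (h p).1 ∧ x ≠ (h p).2 ∧
      y ≠ (h p).1 ∧ y ≠ (h p).2 ∧ a ≠ (h p).1 ∧ a ≠ (h p).2 ∧ b ≠ (h p).1 ∧ b ≠ (h p).2 := by
    intro p hp
    obtain ⟨a1, a2, a3, a4, a5⟩ := F p hp
    refine ⟨?_, a1.1.1, a3.2.2.2.2.1.symm, a1.2.2.2.1.symm, a3.2.2.1.1.symm, ?_, a2.1.1,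
      a2.2.2.2.2.1.symm, a2.2.2.2.1.symm, a2.2.2.1.1.symm, a4.symm, a1.2.1.1, a3.2.1.1.symm,
      a5.symm⟩
    · intro heq
      have h3 := a2.2.2.1
      rw [← heq] at h3
      exact tri a2.1 a2.2.1 h3.symm
    · intro heq
      have h3 := a3.2.2.1
      rw [← heq] at h3
      exact tri a1.2.1 a1.2.2.1 h3
  refine hK E f hP φ ?_ ?_ ?_ ?_
  · intro u p hu
    interval_cases u <;> rfl
  · intro u u' p p' hu hu' hp hp' heq
    obtain ⟨c1, c2, c3, c4, c5, c6, c7, c8, c9, c10, c11, c12, c13, c14⟩ := H p hp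
    obtain ⟨-, -, -, -, -, -, d7, d8, d9, d10, d11, d12, d13, d14⟩ := H p' hp'
    have e1 := hqq p hp p' hp'
    have e2 := hrr p hp p' hp'
    have e3 := hqr p hp p' hp'
    have e4 := hqr p' hp' p hp
    interval_cases u <;> interval_cases u' <;> simp only [hφ] at heq <;>
      first
      | exact ⟨rfl, Or.inr (e1 heq)⟩
      | exact ⟨rfl, Or.inr (e2 heq)⟩
      | exact ⟨rfl, Or.inl (by norm_num)⟩
      | (exfalso; first | exact absurd heq ‹_› | exact absurd heq.symm ‹_›)
  · intro s p hs hp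
    obtain ⟨a1, a2, a3, a4, a5⟩ := F p hp
    interval_cases s
    · exact a1.2.1.2
    · exact a2.2.1.symm.2
    · exact a3.2.1.2
    · exact a2.1.2
    · exact a2.2.2.1.symm.2
    · exact a1.1.2
    · exact a3.2.2.1.symm.2
  · intro s p u hs hu hp
    obtain ⟨a1, a2, a3, a4, a5⟩ := F p hp
    obtain ⟨b1, -⟩ := F 0 (by omega)
    interval_cases u <;> interval_cases s
    · exact a1.2.2.2.2.2.1.trans b1.2.2.2.2.2.1.symm
    · have := a2.2.2.2.2.2.1.trans b1.2.2.2.2.2.1.symm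
      rw [Finset.pair_comm] at this
      exact this
    · exact a3.2.2.2.2.2.1.trans b1.2.2.2.2.2.1.symm
    · exact a1.2.2.2.2.2.2.trans b1.2.2.2.2.2.2.symm
    · have := a2.2.2.2.2.2.2.trans b1.2.2.2.2.2.2.symm
      rw [Finset.pair_comm] at this
      exact this
    · exact a3.2.2.2.2.2.2.trans b1.2.2.2.2.2.2.symm

end Local

/-! ### Part 4: counting -/

theorem holder_three {ι : Type*} (s : Finset ι) (t a b c : ι → ℝ) (ha : ∀ i ∈ s, 0 ≤ a i)
    (hb : ∀ i ∈ s, 0 ≤ b i) (hc : ∀ i ∈ s, 0 ≤ c i)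
    (ht : ∀ i ∈ s, t i ^ 3 ≤ a i * b i * c i) (ht0 : ∀ i ∈ s, 0 ≤ t i) :
    (∑ i ∈ s, t i) ^ 3 ≤ (∑ i ∈ s, a i) * (∑ i ∈ s, b i) * (∑ i ∈ s, c i) := by
  have A0 := Finset.sum_nonneg ha
  have B0 := Finset.sum_nonneg hb
  have C0 := Finset.sum_nonneg hc
  have zero_case : (∀ i ∈ s, a i * b i * c i = 0) →
      (∑ i ∈ s, t i) ^ 3 ≤ (∑ i ∈ s, a i) * (∑ i ∈ s, b i) * (∑ i ∈ s, c i) := by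
    intro h
    have : ∑ i ∈ s, t i = 0 := by
      refine Finset.sum_eq_zero fun i hi => ?_
      have h1 := ht i hi
      rw [h i hi] at h1
      have h2 := pow_nonneg (ht0 i hi) 3
      exact pow_eq_zero_iff (n := 3) (by norm_num) |>.1 (le_antisymm h1 h2)
    rw [this, zero_pow (by norm_num)]
    exact mul_nonneg (mul_nonneg A0 B0) C0
  rcases A0.eq_or_lt with h | hA
  · refine zero_case fun i hi => ?_
    rw [(Finset.sum_eq_zero_iff_of_nonneg ha).1 h.symm i hi]; ring
  rcases B0.eq_or_lt with h | hB
  · refine zero_case fun i hi => ?_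
    rw [(Finset.sum_eq_zero_iff_of_nonneg hb).1 h.symm i hi]; ring
  rcases C0.eq_or_lt with h | hC
  · refine zero_case fun i hi => ?_
    rw [(Finset.sum_eq_zero_iff_of_nonneg hc).1 h.symm i hi]; ring
  set A := ∑ i ∈ s, a i with hAd
  set B := ∑ i ∈ s, b i with hBd
  set C := ∑ i ∈ s, c i with hCd
  obtain ⟨m, hm0, hm⟩ : ∃ m : ℝ, 0 ≤ m ∧ m ^ 3 = A * B * C := by
    refine ⟨(A * B * C) ^ ((1 : ℝ) / 3), by positivity, ?_⟩
    rw [← Real.rpow_natCast, ← Real.rpow_mul (by positivity)]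
    norm_num
  have key : ∀ i ∈ s, t i ≤ m / 3 * (a i / A + b i / B + c i / C) := by
    intro i hi
    have u0 : 0 ≤ a i / A := div_nonneg (ha i hi) A0
    have v0 : 0 ≤ b i / B := div_nonneg (hb i hi) B0
    have w0 : 0 ≤ c i / C := div_nonneg (hc i hi) C0
    have e : a i * b i * c i = m ^ 3 * ((a i / A) * (b i / B) * (c i / C)) := by
      rw [hm]; field_simp
    have amgm : ∀ u v w : ℝ, 0 ≤ u → 0 ≤ v → 0 ≤ w → 27 * (u * v * w) ≤ (u + v + w) ^ 3 := by
      intro u v w hu hv hw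
      nlinarith [mul_nonneg hu (sq_nonneg (v - w)), mul_nonneg hv (sq_nonneg (u - w)),
        mul_nonneg hw (sq_nonneg (u - v)), mul_nonneg (add_nonneg (add_nonneg hu hv) hw)
        (add_nonneg (add_nonneg (sq_nonneg (u - v)) (sq_nonneg (v - w))) (sq_nonneg (u - w)))]
    have h1 := amgm _ _ _ u0 v0 w0
    have h2 := ht i hi
    rw [e] at h2
    have m3 : 0 ≤ m ^ 3 := by positivity
    refine le_of_pow_le_pow_left₀ (n := 3) (by norm_num) (by positivity) ?_
    nlinarith [mul_le_mul_of_nonneg_left h1 m3]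
  have hsum : ∑ i ∈ s, t i ≤ m := by
    refine (Finset.sum_le_sum key).trans (le_of_eq ?_)
    rw [← Finset.mul_sum, Finset.sum_add_distrib, Finset.sum_add_distrib, ← Finset.sum_div,
      ← Finset.sum_div, ← Finset.sum_div, ← hAd, ← hBd, ← hCd, div_self hA.ne', div_self hB.ne',
      div_self hC.ne']
    ring
  rw [← hm]
  exact pow_le_pow_left₀ (Finset.sum_nonneg ht0) hsum 3

theorem sum_inv_fiber_le {α β : Type*} [DecidableEq β] (E : Finset α) (g : α → β)
    (Q : Finset β) (hg : ∀ z ∈ E, g z ∈ Q) :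
    ∑ z ∈ E, (1 : ℝ) / ((E.filter (fun z' => g z' = g z)).card : ℝ) ≤ Q.card := by
  rw [← Finset.sum_fiberwise_of_maps_to hg]
  have : ∀ q ∈ Q, ∑ z ∈ E.filter (fun z => g z = q),
      (1 : ℝ) / ((E.filter (fun z' => g z' = g z)).card : ℝ) ≤ 1 := by
    intro q _
    rw [Finset.sum_congr rfl (g := fun _ =>
      (1 : ℝ) / ((E.filter (fun z' => g z' = q)).card : ℝ))]
    · rw [Finset.sum_const, nsmul_eq_mul, mul_one_div]
      exact div_self_le_one _
    · intro z hz
      rw [(Finset.mem_filter.1 hz).2]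
  refine (Finset.sum_le_sum this).trans ?_
  simp

theorem step_A {V : Type} [DecidableEq V] (K : ℕ) (Q R : Finset V) (E : Finset (V × V))
    (hE : E ⊆ Q ×ˢ R)
    (hK : ∀ a b, (E.filter (fun z => (a, z.2) ∈ E ∧ (z.1, b) ∈ E ∧ z.1 ≠ a ∧ z.2 ≠ b)).card ≤ K) :
    ∃ e : ℕ, E.card ≤ e + Q.card + R.card ∧
      (e : ℝ) ^ 3 ≤ 4 * K * ((Q.card : ℝ) * R.card) ^ 2 := by
  set F1 : V × V → Finset (V × V) := fun z => E.filter (fun z' => z'.1 = z.1) with hF1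
  set F2 : V × V → Finset (V × V) := fun z => E.filter (fun z' => z'.2 = z.2) with hF2
  have hQ : ∀ z ∈ E, z.1 ∈ Q := fun z hz => (Finset.mem_product.1 (hE hz)).1
  have hR : ∀ z ∈ E, z.2 ∈ R := fun z hz => (Finset.mem_product.1 (hE hz)).2
  have count : ∑ z ∈ E, ((F1 z).erase z).card * ((F2 z).erase z).card ≤ K * (Q.card * R.card) := by
    have h1 : ∑ z ∈ E, ((F1 z).erase z).card * ((F2 z).erase z).card =
        (E.sigma (fun z => (F1 z).erase z ×ˢ (F2 z).erase z)).card := by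
      rw [Finset.card_sigma]; simp [Finset.card_product]
    rw [h1, ← Finset.card_product]
    refine Finset.card_le_mul_card_image_of_maps_to
      (f := fun s => (s.2.2.1, s.2.1.2)) ?_ K ?_
    · rintro ⟨z, z', z''⟩ h
      simp only [Finset.mem_sigma, Finset.mem_product, Finset.mem_erase, hF1, hF2,
        Finset.mem_filter] at h ⊢
      exact ⟨hQ _ h.2.2.2.1, hR _ h.2.1.2.1⟩
    · rintro ⟨a, b⟩ _
      refine le_trans ?_ (hK a b)
      refine Finset.card_le_card_of_injOn (fun s => s.1) ?_ ?_
      · rintro ⟨⟨z1, z2⟩, ⟨w1, w2⟩, ⟨v1, v2⟩⟩ h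
        simp only [Finset.coe_filter, Set.mem_ofPred_eq, Finset.mem_sigma, Finset.mem_product,
          Finset.mem_erase, hF1, hF2, Finset.mem_filter, Prod.mk.injEq, ne_eq] at h ⊢
        obtain ⟨⟨g1, ⟨g2, g3, g4⟩, ⟨g5, g6, g7⟩⟩, g8, g9⟩ := h
        subst g4; subst g7; subst g8; subst g9
        refine ⟨g1, g6, g3, ?_, ?_⟩
        · intro h; subst h; exact g5 ⟨rfl, rfl⟩
        · intro h; subst h; exact g2 ⟨rfl, rfl⟩
      · rintro ⟨⟨z1, z2⟩, ⟨w1, w2⟩, ⟨v1, v2⟩⟩ h ⟨⟨z1', z2'⟩, ⟨w1', w2'⟩, ⟨v1', v2'⟩⟩ h' heq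
        simp only [Finset.coe_filter, Set.mem_ofPred_eq, Finset.mem_sigma, Finset.mem_product,
          Finset.mem_erase, hF1, hF2, Finset.mem_filter, Prod.mk.injEq, ne_eq] at h h' heq
        obtain ⟨⟨g1, ⟨g2, g3, g4⟩, ⟨g5, g6, g7⟩⟩, g8, g9⟩ := h
        obtain ⟨⟨g1', ⟨g2', g3', g4'⟩, ⟨g5', g6', g7'⟩⟩, g8', g9'⟩ := h'
        obtain ⟨k1, k2⟩ := heq
        subst g4; subst g7; subst g8; subst g9; subst g4'; subst g7'; subst k1; subst k2
        subst g8'; subst g9'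
        rfl
  set E' := E.filter (fun z => 1 ≤ ((F1 z).erase z).card ∧ 1 ≤ ((F2 z).erase z).card) with hE'
  have c1 : ∀ z ∈ E, (F1 z).card = ((F1 z).erase z).card + 1 := by
    intro z hz
    rw [Finset.card_erase_add_one]; simp [hF1, hz]
  have c2 : ∀ z ∈ E, (F2 z).card = ((F2 z).erase z).card + 1 := by
    intro z hz
    rw [Finset.card_erase_add_one]; simp [hF2, hz]
  refine ⟨E'.card, ?_, ?_⟩
  · have hsub : E ⊆ E' ∪ E.filter (fun z => ((F1 z).erase z).card = 0) ∪
        E.filter (fun z => ((F2 z).erase z).card = 0) := by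
      intro z hz
      simp only [hE', Finset.mem_union, Finset.mem_filter, hz, true_and]
      omega
    have i1 : (E.filter (fun z => ((F1 z).erase z).card = 0)).card ≤ Q.card := by
      refine Finset.card_le_card_of_injOn (fun z => z.1) ?_ ?_
      · intro z hz
        exact hQ _ (Finset.mem_filter.1 hz).1
      · intro z hz z' hz' heq
        obtain ⟨h1, h2⟩ := Finset.mem_filter.1 hz
        obtain ⟨h1', h2'⟩ := Finset.mem_filter.1 hz'
        by_contra hne
        rw [Finset.card_eq_zero] at h2
        have : z' ∈ (F1 z).erase z := by
          simp only [hF1, Finset.mem_erase, Finset.mem_filter]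
          exact ⟨Ne.symm hne, h1', heq.symm⟩
        rw [h2] at this
        simp at this
    have i2 : (E.filter (fun z => ((F2 z).erase z).card = 0)).card ≤ R.card := by
      refine Finset.card_le_card_of_injOn (fun z => z.2) ?_ ?_
      · intro z hz
        exact hR _ (Finset.mem_filter.1 hz).1
      · intro z hz z' hz' heq
        obtain ⟨h1, h2⟩ := Finset.mem_filter.1 hz
        obtain ⟨h1', h2'⟩ := Finset.mem_filter.1 hz'
        by_contra hne
        rw [Finset.card_eq_zero] at h2
        have : z' ∈ (F2 z).erase z := by
          simp only [hF2, Finset.mem_erase, Finset.mem_filter]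
          exact ⟨Ne.symm hne, h1', heq.symm⟩
        rw [h2] at this
        simp at this
    have := Finset.card_le_card hsub
    have u1 := Finset.card_union_le (E' ∪ E.filter (fun z => ((F1 z).erase z).card = 0))
      (E.filter (fun z => ((F2 z).erase z).card = 0))
    have u2 := Finset.card_union_le E' (E.filter (fun z => ((F1 z).erase z).card = 0))
    omega
  · have hE'E : E' ⊆ E := Finset.filter_subset _ _
    have hol := holder_three E' (fun _ => (1 : ℝ))
      (fun z => 4 * ((((F1 z).erase z).card * ((F2 z).erase z).card : ℕ) : ℝ))
      (fun z => 1 / ((F1 z).card : ℝ)) (fun z => 1 / ((F2 z).card : ℝ))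
      (fun _ _ => by positivity) (fun _ _ => by positivity) (fun _ _ => by positivity)
      (by
        intro z hz
        obtain ⟨hzE, p1, p2⟩ := Finset.mem_filter.1 hz
        rw [c1 z hzE, c2 z hzE]
        have p1' : (1 : ℝ) ≤ (((F1 z).erase z).card : ℝ) := by exact_mod_cast p1
        have p2' : (1 : ℝ) ≤ (((F2 z).erase z).card : ℝ) := by exact_mod_cast p2
        generalize (((F1 z).erase z).card) = u at *
        generalize (((F2 z).erase z).card) = v at *
        push_cast
        rw [mul_one_div, mul_one_div, div_div, le_div_iff₀ (by positivity)]
        nlinarith [mul_nonneg (sub_nonneg.2 p1') (sub_nonneg.2 p2')])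
      (fun _ _ => by positivity)
    have s1 : ∑ z ∈ E', 4 * ((((F1 z).erase z).card * ((F2 z).erase z).card : ℕ) : ℝ) ≤
        4 * (K * (Q.card * R.card)) := by
      rw [← Finset.mul_sum]
      refine mul_le_mul_of_nonneg_left ?_ (by norm_num)
      refine (Finset.sum_le_sum_of_subset_of_nonneg hE'E (fun _ _ _ => by positivity)).trans ?_
      exact_mod_cast count
    have s2 : ∑ z ∈ E', 1 / ((F1 z).card : ℝ) ≤ Q.card :=
      (Finset.sum_le_sum_of_subset_of_nonneg hE'E (fun _ _ _ => by positivity)).trans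
        (sum_inv_fiber_le E (fun z => z.1) Q hQ)
    have s3 : ∑ z ∈ E', 1 / ((F2 z).card : ℝ) ≤ R.card :=
      (Finset.sum_le_sum_of_subset_of_nonneg hE'E (fun _ _ _ => by positivity)).trans
        (sum_inv_fiber_le E (fun z => z.2) R hR)
    have n2 : 0 ≤ ∑ z ∈ E', 1 / ((F1 z).card : ℝ) := Finset.sum_nonneg fun _ _ => by positivity
    have n3 : 0 ≤ ∑ z ∈ E', 1 / ((F2 z).card : ℝ) := Finset.sum_nonneg fun _ _ => by positivity
    simp only [Finset.sum_const, nsmul_eq_mul, mul_one] at hol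
    refine hol.trans ((mul_le_mul (mul_le_mul s1 s2 n2 (by positivity)) s3 n3
      (by positivity)).trans (le_of_eq ?_))
    ring

open Classical in
theorem graph_bound : ∃ L : ℝ, 0 ≤ L ∧ ∀ (n : ℕ) (E : Finset (Fin n) → Prop)
    (f : Finset (Fin n) → Fin n → Bool), TriSep E f →
    (((Finset.univ : Finset (Fin n × Fin n)).filter
      (fun z => AdjE E z.1 z.2)).card : ℝ) ^ 5 ≤ L * (n : ℝ) ^ 8 := by
  obtain ⟨K, hK⟩ := exists_path_bound
  refine ⟨2048 * K + 400, by positivity, ?_⟩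
  intro n E f hP
  set A : Fin n → Fin n → ℝ := fun x y => if AdjE E x y then 1 else 0 with hA
  set N : Fin n → Finset (Fin n) := fun x => Finset.univ.filter (fun y => AdjE E x y) with hN
  set d : Fin n → ℝ := fun x => ((N x).card : ℝ) with hd
  have A0 : ∀ x y, 0 ≤ A x y := by intro x y; simp only [hA]; split_ifs <;> norm_num
  have Asymm : ∀ x y, A x y = A y x := by
    intro x y
    simp only [hA]
    have : AdjE E x y ↔ AdjE E y x := ⟨AdjE.symm, AdjE.symm⟩
    simp only [this]
  have dA : ∀ x, d x = ∑ y, A x y := by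
    intro x; simp [hd, hA, hN]
  have d0 : ∀ x, 0 ≤ d x := by intro x; simp only [hd]; positivity
  set M : ℝ := (((Finset.univ : Finset (Fin n × Fin n)).filter
      (fun z => AdjE E z.1 z.2)).card : ℝ) with hM
  have MA : M = ∑ z : Fin n × Fin n, A z.1 z.2 := by
    simp [hM, hA]
  have Md : M = ∑ x, d x := by
    rw [MA, Fintype.sum_prod_type]; simp only [dA]
  have M0 : 0 ≤ M := by simp only [hM]; positivity
  have n0 : (0 : ℝ) ≤ n := by positivity
  have Mn : M ≤ (n : ℝ) ^ 2 := by
    have : ((Finset.univ : Finset (Fin n × Fin n)).filter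
      (fun z => AdjE E z.1 z.2)).card ≤ n ^ 2 := by
      refine (Finset.card_filter_le _ _).trans ?_
      simp [sq]
    simp only [hM]; exact_mod_cast this
  -- cube roots
  have cr : ∀ a : ℝ, 0 ≤ a → ∃ m : ℝ, 0 ≤ m ∧ m ^ 3 = a := by
    intro a ha
    refine ⟨a ^ ((1 : ℝ) / 3), by positivity, ?_⟩
    rw [← Real.rpow_natCast, ← Real.rpow_mul ha]
    norm_num
  choose z z0 z3 using fun x => cr (d x) (d0 x)
  obtain ⟨κ, κ0, κ3⟩ := cr (4 * (K : ℝ)) (by positivity)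
  -- number of walks of length three
  set W : Fin n → Fin n → Finset (Fin n × Fin n) := fun x y =>
    Finset.univ.filter (fun p => AdjE E x p.1 ∧ AdjE E p.1 p.2 ∧ AdjE E p.2 y) with hW
  have class_bound : ∀ x y X Y, ((Finset.univ.filter
      (fun p : Fin n × Fin n => Cl E f x y X Y p.1 p.2)).card : ℝ) ≤
      κ * z x ^ 2 * z y ^ 2 + d x + d y := by
    intro x y X Y
    obtain ⟨e, h1, h2⟩ := step_A K (N x) (N y)
      (Finset.univ.filter (fun p : Fin n × Fin n => Cl E f x y X Y p.1 p.2)) (by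
        intro p hp
        simp only [Finset.mem_filter, Finset.mem_univ, true_and, Finset.mem_product, hN] at hp ⊢
        exact ⟨hp.1, hp.2.2.1.symm⟩) (by
        intro a b
        refine hK E f hP x y X Y a b _ ?_
        intro p hp
        simp only [Finset.mem_filter, Finset.mem_univ, true_and] at hp
        tauto)
    have h3 : (e : ℝ) ≤ κ * z x ^ 2 * z y ^ 2 := by
      refine le_of_pow_le_pow_left₀ (n := 3) (by norm_num) (by positivity) (h2.trans ?_)
      have e1 : ((N x).card : ℝ) = z x ^ 3 := (z3 x).symm
      have e2 : ((N y).card : ℝ) = z y ^ 3 := (z3 y).symm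
      rw [e1, e2, ← κ3]
      exact le_of_eq (by ring)
    have h4 : ((Finset.univ.filter
      (fun p : Fin n × Fin n => Cl E f x y X Y p.1 p.2)).card : ℝ) ≤ e + d x + d y := by
      simp only [hd]; exact_mod_cast h1
    linarith
  have W_bound : ∀ x y, ((W x y).card : ℝ) ≤ 4 * κ * z x ^ 2 * z y ^ 2 + 5 * (d x + d y) := by
    intro x y
    set G : Bool → Bool → Finset (Fin n × Fin n) := fun X Y => Finset.univ.filter
      (fun p : Fin n × Fin n => Cl E f x y X Y p.1 p.2) with hG
    have hsub : W x y ⊆ G true true ∪ G true false ∪ G false true ∪ G false false ∪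
        (N y).image (fun r => (y, r)) ∪ (N x).image (fun q => (q, x)) := by
      rintro ⟨q, r⟩ hp
      simp only [hW, Finset.mem_filter, Finset.mem_univ, true_and] at hp
      obtain ⟨p1, p2, p3⟩ := hp
      by_cases h1 : q = y
      · subst h1
        apply Finset.mem_union_left
        apply Finset.mem_union_right
        simp only [Finset.mem_image, hN, Finset.mem_filter, Finset.mem_univ, true_and]
        exact ⟨r, p2, rfl⟩
      by_cases h2 : r = x
      · subst h2
        apply Finset.mem_union_right
        simp only [Finset.mem_image, hN, Finset.mem_filter, Finset.mem_univ, true_and]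
        exact ⟨q, p1, rfl⟩
      have hm : (q, r) ∈ G (f {q, r} x) (f {q, r} y) := by
        simp only [hG, Finset.mem_filter, Finset.mem_univ, true_and]
        exact ⟨p1, p2, p3, h1, h2, rfl, rfl⟩
      clear_value G
      simp only [Finset.mem_union]
      generalize f {q, r} x = X at hm
      generalize f {q, r} y = Y at hm
      cases X <;> cases Y <;> tauto
    have hc : (W x y).card ≤ (G true true).card + (G true false).card + (G false true).card +
        (G false false).card + (N y).card + (N x).card := by
      refine (Finset.card_le_card hsub).trans ?_
      refine (Finset.card_union_le _ _).trans (add_le_add ?_ Finset.card_image_le)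
      refine (Finset.card_union_le _ _).trans (add_le_add ?_ Finset.card_image_le)
      refine (Finset.card_union_le _ _).trans (add_le_add ?_ le_rfl)
      refine (Finset.card_union_le _ _).trans (add_le_add ?_ le_rfl)
      exact Finset.card_union_le _ _
    have hc' : ((W x y).card : ℝ) ≤ (G true true).card + (G true false).card +
        (G false true).card + (G false false).card + d y + d x := by
      simp only [hd]; exact_mod_cast hc
    have g1 := class_bound x y true true
    have g2 := class_bound x y true false
    have g3 := class_bound x y false true
    have g4 := class_bound x y false false
    simp only [hG] at hc'
    linarith
  set S : ℝ := ∑ x, z x ^ 2 with hS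
  have S0 : 0 ≤ S := Finset.sum_nonneg fun _ _ => by positivity
  have upper : ∑ x, ∑ y, ((W x y).card : ℝ) ≤ 4 * κ * S ^ 2 + 10 * n * M := by
    refine (Finset.sum_le_sum fun x _ => Finset.sum_le_sum fun y _ => W_bound x y).trans
      (le_of_eq ?_)
    simp only [Finset.sum_add_distrib, ← Finset.mul_sum, mul_add, Finset.sum_const, nsmul_eq_mul,
      Finset.card_univ, Fintype.card_fin, ← hS, ← Finset.sum_mul, ← Md]
    ring
  have walk : ∑ x, ∑ y, ((W x y).card : ℝ) = ∑ p : Fin n × Fin n, A p.1 p.2 * d p.1 * d p.2 := by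
    have h1 : ∀ x y, ((W x y).card : ℝ) = ∑ p : Fin n × Fin n, A x p.1 * A p.1 p.2 * A p.2 y := by
      intro x y
      simp only [hW, Finset.card_filter]
      push_cast
      refine Finset.sum_congr rfl fun p _ => ?_
      simp only [hA]
      by_cases h1 : AdjE E x p.1 <;> by_cases h2 : AdjE E p.1 p.2 <;>
        by_cases h3 : AdjE E p.2 y <;> simp [h1, h2, h3]
    simp only [h1]
    rw [Finset.sum_congr rfl fun x _ => Finset.sum_comm, Finset.sum_comm]
    refine Finset.sum_congr rfl fun p _ => ?_
    simp only [← Finset.mul_sum, ← Finset.sum_mul]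
    rw [dA p.1, dA p.2, Finset.sum_congr rfl fun x _ => Asymm x p.1]
    ring
  have dpos : ∀ x y, AdjE E x y → 0 < d x := by
    intro x y h
    simp only [hd]
    exact_mod_cast Finset.card_pos.2 ⟨y, by simp [hN, h]⟩
  have lower : M ^ 3 ≤ (∑ p : Fin n × Fin n, A p.1 p.2 * d p.1 * d p.2) * n * n := by
    have hol := holder_three Finset.univ (fun p : Fin n × Fin n => A p.1 p.2)
      (fun p => A p.1 p.2 * d p.1 * d p.2) (fun p => A p.1 p.2 / d p.1)
      (fun p => A p.1 p.2 / d p.2)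
      (fun p _ => mul_nonneg (mul_nonneg (A0 _ _) (d0 _)) (d0 _))
      (fun p _ => div_nonneg (A0 _ _) (d0 _)) (fun p _ => div_nonneg (A0 _ _) (d0 _))
      (by
        intro p _
        by_cases h : AdjE E p.1 p.2
        · have k1 := dpos _ _ h
          have k2 := dpos _ _ h.symm
          have : A p.1 p.2 = 1 := by simp [hA, h]
          simp only [this]
          field_simp
          exact le_rfl
        · have : A p.1 p.2 = 0 := by simp [hA, h]
          simp [this])
      (fun p _ => A0 _ _)
    have b1 : ∑ p : Fin n × Fin n, A p.1 p.2 / d p.1 ≤ n := by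
      rw [Fintype.sum_prod_type]
      have : ∀ x ∈ (Finset.univ : Finset (Fin n)), ∑ y, A x y / d x ≤ 1 := by
        intro x _
        rw [← Finset.sum_div, ← dA]
        exact div_self_le_one _
      refine (Finset.sum_le_sum this).trans ?_
      simp
    have b2 : ∑ p : Fin n × Fin n, A p.1 p.2 / d p.2 ≤ n := by
      rw [Fintype.sum_prod_type_right]
      have : ∀ y ∈ (Finset.univ : Finset (Fin n)), ∑ x, A x y / d y ≤ 1 := by
        intro y _
        rw [← Finset.sum_div, Finset.sum_congr rfl fun x _ => Asymm x y, ← dA]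
        exact div_self_le_one _
      refine (Finset.sum_le_sum this).trans ?_
      simp
    have p1 : 0 ≤ ∑ p : Fin n × Fin n, A p.1 p.2 * d p.1 * d p.2 :=
      Finset.sum_nonneg fun p _ => mul_nonneg (mul_nonneg (A0 _ _) (d0 _)) (d0 _)
    have p2 : 0 ≤ ∑ p : Fin n × Fin n, A p.1 p.2 / d p.1 :=
      Finset.sum_nonneg fun p _ => div_nonneg (A0 _ _) (d0 _)
    have p3 : 0 ≤ ∑ p : Fin n × Fin n, A p.1 p.2 / d p.2 :=
      Finset.sum_nonneg fun p _ => div_nonneg (A0 _ _) (d0 _)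
    rw [MA]
    exact hol.trans (mul_le_mul (mul_le_mul_of_nonneg_left b1 p1) b2 p3 (mul_nonneg p1 n0))
  have S3 : S ^ 3 ≤ M * M * n := by
    have hol := holder_three Finset.univ (fun x => z x ^ 2) d d (fun _ => (1 : ℝ))
      (fun x _ => d0 x) (fun x _ => d0 x) (fun _ _ => by norm_num)
      (fun x _ => by rw [← z3 x]; exact le_of_eq (by ring)) (fun x _ => by positivity)
    simpa [← Md, ← hS] using hol
  have main : M ^ 3 ≤ (4 * κ * S ^ 2 + 10 * n * M) * n * n := by
    refine lower.trans ?_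
    rw [walk] at upper
    gcongr
  clear_value M S
  clear upper walk lower W_bound class_bound
  rcases M0.eq_or_lt with h | hMpos
  · rw [← h, zero_pow (by norm_num)]
    positivity
  by_cases hc : 4 * κ * S ^ 2 ≤ 10 * n * M
  · have h1 : M ^ 3 ≤ 20 * (n : ℝ) ^ 3 * M := by
      have : (4 * κ * S ^ 2 + 10 * n * M) * n * n ≤ (20 * n * M) * n * n := by
        gcongr; linarith
      nlinarith
    have h2 : M ^ 2 ≤ 20 * (n : ℝ) ^ 3 := by
      refine le_of_mul_le_mul_right ?_ hMpos
      nlinarith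
    have h3 : M ^ 4 ≤ 400 * (n : ℝ) ^ 6 := by
      have := pow_le_pow_left₀ (by positivity) h2 2
      calc M ^ 4 = (M ^ 2) ^ 2 := by ring
        _ ≤ _ := this
        _ = _ := by ring
    have h4 : M ^ 5 ≤ 400 * (n : ℝ) ^ 8 := by
      calc M ^ 5 = M ^ 4 * M := by ring
        _ ≤ 400 * (n : ℝ) ^ 6 * (n : ℝ) ^ 2 := mul_le_mul h3 Mn M0 (by positivity)
        _ = _ := by ring
    have : 0 ≤ 2048 * (K : ℝ) * (n : ℝ) ^ 8 := by positivity
    linarith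
  · have h1 : M ^ 3 ≤ 8 * κ * S ^ 2 * (n : ℝ) ^ 2 := by
      have : (4 * κ * S ^ 2 + 10 * n * M) * n * n ≤ (8 * κ * S ^ 2) * n * n := by
        gcongr; linarith
      nlinarith
    have h2 : M ^ 9 ≤ 2048 * K * (n : ℝ) ^ 8 * M ^ 4 := by
      calc M ^ 9 = (M ^ 3) ^ 3 := by ring
        _ ≤ (8 * κ * S ^ 2 * (n : ℝ) ^ 2) ^ 3 := pow_le_pow_left₀ (by positivity) h1 3
        _ = 512 * (4 * K) * (n : ℝ) ^ 6 * (S ^ 3) ^ 2 := by rw [← κ3]; ring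
        _ ≤ 512 * (4 * K) * (n : ℝ) ^ 6 * (M * M * n) ^ 2 := by gcongr
        _ = _ := by ring
    have h3 : M ^ 5 ≤ 2048 * K * (n : ℝ) ^ 8 := by
      refine le_of_mul_le_mul_right ?_ (pow_pos hMpos 4)
      calc M ^ 5 * M ^ 4 = M ^ 9 := by ring
        _ ≤ _ := h2
    have : 0 ≤ 400 * (n : ℝ) ^ 8 := by positivity
    linarith

/-- support words -/
def SuppIs {n : ℕ} (w x : Fin n → Fin 3) (e : Finset (Fin n)) : Prop :=
  ∀ k, x k = w k ↔ k ∈ e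

theorem SuppIs.inj {n : ℕ} {w x : Fin n → Fin 3} {e e' : Finset (Fin n)} (h : SuppIs w x e)
    (h' : SuppIs w x e') : e = e' := by
  ext k; rw [← h k, ← h' k]

theorem fin3_cases : ∀ a b c w : Fin 3, (∀ t : Fin 3, t = a ∨ t = b ∨ t = c) →
    (a = w ∧ b ≠ w ∧ c ≠ w ∧ decide (b = w + 1) ≠ decide (c = w + 1)) ∨
    (a ≠ w ∧ b = w ∧ c ≠ w ∧ decide (a = w + 1) ≠ decide (c = w + 1)) ∨
    (a ≠ w ∧ b ≠ w ∧ c = w ∧ decide (a = w + 1) ≠ decide (b = w + 1)) := by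
  decide

theorem trifferent_sep {n : ℕ} {C : Finset (Fin n → Fin 3)} (hC : Trifferent C)
    (w x y z : Fin n → Fin 3) (hx : x ∈ C) (hy : y ∈ C) (hz : z ∈ C) (h1 : x ≠ y) (h2 : x ≠ z)
    (h3 : y ≠ z) : ∃ i,
    (x i = w i ∧ y i ≠ w i ∧ z i ≠ w i ∧ decide (y i = w i + 1) ≠ decide (z i = w i + 1)) ∨
    (x i ≠ w i ∧ y i = w i ∧ z i ≠ w i ∧ decide (x i = w i + 1) ≠ decide (z i = w i + 1)) ∨
    (x i ≠ w i ∧ y i ≠ w i ∧ z i = w i ∧ decide (x i = w i + 1) ≠ decide (y i = w i + 1)) := by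
  obtain ⟨i, hi⟩ := hC x hx y hy z hz h1 h2 h3
  refine ⟨i, fin3_cases _ _ _ _ fun t => ?_⟩
  have : t ∈ ({x i, y i, z i} : Set (Fin 3)) := by rw [hi]; trivial
  simpa using this

open Classical in
theorem exists_graph {n : ℕ} {C : Finset (Fin n → Fin 3)} (hC : Trifferent C)
    (w : Fin n → Fin 3) :
    ∃ f : Finset (Fin n) → Fin n → Bool, TriSep (fun e => ∃ x ∈ C, SuppIs w x e) f := by
  refine ⟨fun e v => if h : ∃ x ∈ C, SuppIs w x e then decide (h.choose v = w v + 1) else false, ?_⟩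
  intro e₁ e₂ e₃ H1 H2 H3 d1 d2 d3
  obtain ⟨a1, b1⟩ := H1.choose_spec
  obtain ⟨a2, b2⟩ := H2.choose_spec
  obtain ⟨a3, b3⟩ := H3.choose_spec
  simp only [H1, H2, H3, dif_pos]
  generalize H1.choose = x at *
  generalize H2.choose = y at *
  generalize H3.choose = z at *
  obtain ⟨i, hi⟩ := trifferent_sep hC w x y z a1 a2 a3
    (by rintro rfl; exact d1 (b1.inj b2)) (by rintro rfl; exact d2 (b1.inj b3))
    (by rintro rfl; exact d3 (b2.inj b3))
  refine ⟨i, ?_⟩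
  simp only [ne_eq, b1 i, b2 i, b3 i] at hi
  exact hi

open Classical in
theorem supp_words_card {n : ℕ} {C : Finset (Fin n → Fin 3)} (hC : Trifferent C)
    (w : Fin n → Fin 3) (e : Finset (Fin n)) : (C.filter (fun x => SuppIs w x e)).card ≤ 2 := by
  by_contra h
  push Not at h
  obtain ⟨x, y, z, hx, hy, hz, h1, h2, h3⟩ := Finset.two_lt_card_iff.1 h
  rw [Finset.mem_filter] at hx hy hz
  obtain ⟨i, hi⟩ := trifferent_sep hC w x y z hx.1 hy.1 hz.1 h1 h2 h3
  simp only [ne_eq, hx.2 i, hy.2 i, hz.2 i] at hi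
  tauto

open Classical in
theorem translates_card {n : ℕ} (x : Fin n → Fin 3) (e : Finset (Fin n)) :
    ((Finset.univ : Finset (Fin n → Fin 3)).filter (fun w => SuppIs w x e)).card =
      2 ^ (n - e.card) := by
  have h : (Finset.univ : Finset (Fin n → Fin 3)).filter (fun w => SuppIs w x e) =
      Fintype.piFinset (fun k => if k ∈ e then {x k} else Finset.univ.erase (x k)) := by
    ext w
    rw [Finset.mem_filter, Fintype.mem_piFinset]
    refine (and_iff_right (Finset.mem_univ _)).trans ?_
    refine forall_congr' fun k => ?_
    by_cases hk : k ∈ e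
    · simp [hk, eq_comm]
    · simp [hk, eq_comm]
  rw [h, Fintype.card_piFinset]
  have : ∀ k : Fin n, (if k ∈ e then ({x k} : Finset (Fin 3)) else Finset.univ.erase (x k)).card =
      if k ∈ e then 1 else 2 := by
    intro k
    split_ifs
    · simp
    · rw [Finset.card_erase_of_mem (Finset.mem_univ _)]; simp
  simp only [this]
  rw [Finset.prod_ite]
  simp only [Finset.prod_const, one_pow, one_mul]
  congr 1
  have := Finset.card_compl e
  rw [Fintype.card_fin] at this
  rw [← this]
  congr 1
  ext k; simp

open Classical in
theorem averaging {n : ℕ} {C : Finset (Fin n → Fin 3)} (hC : Trifferent C) (m : ℝ) (hm : 0 ≤ m)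
    (hB : ∀ w : Fin n → Fin 3, (((Finset.univ : Finset (Fin n × Fin n)).filter
      (fun z => AdjE (fun e => ∃ x ∈ C, SuppIs w x e) z.1 z.2)).card : ℝ) ≤ m) :
    (C.card : ℝ) * (n * n - n) * 2 ^ (n - 2) ≤ 3 ^ n * (2 * m) := by
  set D : Finset (Fin n × Fin n) := Finset.univ.filter (fun z => z.1 ≠ z.2) with hD
  have Dc : (D.card : ℝ) = n * n - n := by
    have h1 : D = (Finset.univ : Finset (Fin n)).offDiag := by
      ext z; simp [hD]
    rw [h1, Finset.offDiag_card]
    simp only [Finset.card_univ, Fintype.card_fin]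
    rw [Nat.cast_sub (Nat.le_mul_self n)]
    push_cast; ring
  have lhs : ∑ x ∈ C, ∑ z ∈ D, ∑ w : Fin n → Fin 3, (if SuppIs w x {z.1, z.2} then (1 : ℝ) else 0)
      = (C.card : ℝ) * (n * n - n) * 2 ^ (n - 2) := by
    have : ∀ x ∈ C, ∀ z ∈ D, ∑ w : Fin n → Fin 3,
        (if SuppIs w x {z.1, z.2} then (1 : ℝ) else 0) = 2 ^ (n - 2) := by
      intro x _ z hz
      have hz' : z.1 ≠ z.2 := by simpa [hD] using hz
      have := translates_card x {z.1, z.2}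
      rw [Finset.card_pair hz'] at this
      rw [Finset.sum_boole, this]
      push_cast; rfl
    rw [Finset.sum_congr rfl fun x hx => Finset.sum_congr rfl (this x hx)]
    simp only [Finset.sum_const, nsmul_eq_mul]
    rw [Dc]; ring
  rw [← lhs]
  have swap : ∑ x ∈ C, ∑ z ∈ D, ∑ w : Fin n → Fin 3,
      (if SuppIs w x {z.1, z.2} then (1 : ℝ) else 0) =
      ∑ w : Fin n → Fin 3, ∑ z ∈ D, ∑ x ∈ C,
      (if SuppIs w x {z.1, z.2} then (1 : ℝ) else 0) := by
    rw [Finset.sum_comm, Finset.sum_congr rfl fun z _ => Finset.sum_comm, Finset.sum_comm]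
  rw [swap]
  have each : ∀ w ∈ (Finset.univ : Finset (Fin n → Fin 3)), ∑ z ∈ D, ∑ x ∈ C,
      (if SuppIs w x {z.1, z.2} then (1 : ℝ) else 0) ≤ 2 * m := by
    intro w _
    have h1 : ∀ z ∈ D, ∑ x ∈ C, (if SuppIs w x {z.1, z.2} then (1 : ℝ) else 0) ≤
        2 * (if AdjE (fun e => ∃ x ∈ C, SuppIs w x e) z.1 z.2 then (1 : ℝ) else 0) := by
      intro z hz
      have hz' : z.1 ≠ z.2 := by simpa [hD] using hz
      by_cases h : ∃ x ∈ C, SuppIs w x {z.1, z.2}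
      · rw [if_pos ⟨hz', h⟩, Finset.sum_boole]
        have := supp_words_card hC w {z.1, z.2}
        have h2 : ((C.filter (fun x => SuppIs w x {z.1, z.2})).card : ℝ) ≤ 2 := by
          exact_mod_cast this
        linarith
      · rw [if_neg (fun h' => h h'.2)]
        rw [Finset.sum_eq_zero]
        · norm_num
        · intro x hx
          rw [if_neg (fun h' => h ⟨x, hx, h'⟩)]
    refine (Finset.sum_le_sum h1).trans ?_
    rw [← Finset.mul_sum]
    refine mul_le_mul_of_nonneg_left ?_ (by norm_num)
    refine le_trans ?_ (hB w)
    rw [← Finset.sum_boole]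
    exact Finset.sum_le_sum_of_subset_of_nonneg (Finset.subset_univ _)
      (fun _ _ _ => by split_ifs <;> norm_num)
  refine (Finset.sum_le_sum each).trans (le_of_eq ?_)
  simp

/-- Main theorem: `T(n) ≤ c · n^(-2/5) · (3/2)^n`. -/
theorem main_trifference_bound :
    ∃ c : ℝ, ∀ n : ℕ, 1 ≤ n → ∀ C : Finset (Fin n → Fin 3), Trifferent C →
      (C.card : ℝ) ≤ c * (n : ℝ) ^ (-(2 : ℝ) / 5) * (3 / 2) ^ n := by
  obtain ⟨L, L0, hL⟩ := graph_bound
  set l : ℝ := L ^ ((1 : ℝ) / 5) with hl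
  have l0 : 0 ≤ l := by positivity
  have l5 : l ^ 5 = L := by
    rw [hl, ← Real.rpow_natCast, ← Real.rpow_mul L0]; norm_num
  refine ⟨16 * l + 3, ?_⟩
  intro n hn C hC
  rcases hn.eq_or_lt with h1 | hn2
  · subst h1
    have : C.card ≤ 3 := by
      refine (Finset.card_le_univ C).trans ?_
      simp
    have h3 : (C.card : ℝ) ≤ 3 := by exact_mod_cast this
    simp only [Nat.cast_one, Real.one_rpow]
    linarith
  have n2 : (2 : ℝ) ≤ n := by exact_mod_cast hn2
  have npos : (0 : ℝ) < n := by linarith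
  set v : ℝ := (n : ℝ) ^ ((8 : ℝ) / 5) with hv
  have v0 : 0 ≤ v := by positivity
  have v5 : v ^ 5 = (n : ℝ) ^ 8 := by
    rw [hv, ← Real.rpow_natCast, ← Real.rpow_mul npos.le, ← Real.rpow_natCast]; norm_num
  have vn : v = (n : ℝ) ^ 2 * (n : ℝ) ^ (-(2 : ℝ) / 5) := by
    rw [hv, ← Real.rpow_natCast, ← Real.rpow_add npos]; norm_num
  set u : ℝ := (n : ℝ) ^ (-(2 : ℝ) / 5) with hu
  have u0 : 0 ≤ u := by positivity
  have hav := averaging hC (l * v) (by positivity) (by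
    intro w
    obtain ⟨f, hf⟩ := exists_graph hC w
    refine le_of_pow_le_pow_left₀ (n := 5) (by norm_num) (by positivity) ?_
    rw [mul_pow, l5, v5]
    exact hL n _ f hf)
  have p2 : (2 : ℝ) ^ n = 4 * 2 ^ (n - 2) := by
    obtain ⟨k, rfl⟩ := Nat.exists_eq_add_of_le hn2
    rw [show 1 + 1 + k - 2 = k by omega, pow_add]
    norm_num
  have h1 : (C.card : ℝ) * 2 ^ n * (n : ℝ) ^ 2 ≤ 16 * l * u * 3 ^ n * (n : ℝ) ^ 2 := by
    have hc0 : 0 ≤ (C.card : ℝ) * 2 ^ (n - 2) := by positivity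
    have : (n : ℝ) ^ 2 ≤ 2 * (n * n - n) := by nlinarith
    have h2 := mul_le_mul_of_nonneg_left this hc0
    rw [vn] at hav
    rw [p2]
    nlinarith
  have h2 : (C.card : ℝ) * 2 ^ n ≤ 16 * l * u * 3 ^ n := le_of_mul_le_mul_right h1 (by positivity)
  have h3 : (C.card : ℝ) ≤ 16 * l * u * (3 / 2) ^ n := by
    rw [div_pow, mul_div_assoc', le_div_iff₀ (by positivity)]
    exact h2
  refine h3.trans ?_
  gcongr
  linarith
end
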